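/- Let G be a finite group which is a central product G = MC, where M ≅ SL(2,5), C is a subgroup commuting elementwise with M, and M ∩ C = Z(M) (the center of M, of order 2). Then the average of the degrees of those irreducible complex characters of G that have even degree is at least 18/5. -/

import Mathlib

open CategoryTheory

/-- The set of irreducible complex characters of `G`: characters of simple
finite-dimensional complex representations of `G`. -/
noncomputable def IrrChar (G : Type) [Group G] : Set (G → ℂ) :=
  {χ | ∃ V : FDRep ℂ G, Simple V ∧ χ = fun g => V.character g}

/-- The degree of a character, read off from its value at `1`. -/
noncomputable def charDeg {G : Type} [Group G] (χ : G → ℂ) : ℕ :=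
  ⌊(χ 1).re⌋₊

/-- The average degree of the irreducible characters of `G` satisfying a
predicate `p` (with the convention that the average of the empty set is `0`). -/
noncomputable def acdRel (G : Type) [Group G] (p : (G → ℂ) → Prop) : ℝ :=
  (∑ᶠ χ ∈ {χ ∈ IrrChar G | p χ}, (charDeg χ : ℝ)) /
    ({χ ∈ IrrChar G | p χ} : Set (G → ℂ)).ncard

/-- The average character degree of `G`. -/
noncomputable def acd (G : Type) [Group G] : ℝ := acdRel G fun _ => True
/-- The average degree of the irreducible characters of `G` of even degree
(`0` if there are none). -/
noncomputable def acde (G : Type) [Group G] : ℝ := acdRel G fun χ => Even (charDeg χ)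

/-!
`G` is a quotient of `SL(2, 5) × C`. Since `SL(2, 5)` is perfect, an irreducible character of `G` of
degree two is either trivial on `SL(2, 5)`, or inflates to `θ · l`, where `l` is a linear character
of `C` and `θ` is one of the two faithful characters of degree two of `SL(2, 5)`, which the seventh
power map exchanges.

If `f` inflates to `θ · l`, then `f * dual f` inflates to `θ ^ 2`, so that for every odd integral
polynomial `P` some virtual character of `G` inflates to `P(θ) · l`. In particular this holds for
the other faithful character `η = θ ^ 7 - 7 θ ^ 5 + 14 θ ^ 3 - 7 θ`, and multiplying two lifts gives
lifts of `θ η` times a linear character. The functions `θ ^ 3 - 2 θ` and `θ η`, of degree four, and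
`θ ^ 5 - 4 θ ^ 3 + 3 θ`, of degree six, have norm one, hence so do their lifts, which are therefore
irreducible characters. The Steinberg character, of degree five, extends to `G`, and multiplication
by it turns the characters of degree two that are trivial on `SL(2, 5)` into irreducible characters
of degree ten. So if `n` characters lift some `θ · l`, there are `n` lifting some `η · l`, at least
`2 n` irreducible characters of degree four, and at least `n` of degree six.

The degrees `2, 4, 6, 10` deviate from `18 / 5` by `-8 / 5`, `2 / 5`, `12 / 5` and `32 / 5`, all
even degrees above two deviate positively, and `2 n · 8 / 5 = 2 n · 2 / 5 + n · 12 / 5`. An even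
degree exists because the central involution of `SL(2, 5)` acts by `-1` in some irreducible
representation, with determinant one.
-/

open Module Representation in
theorem character_eq_add_of_isCompl {k G V : Type*} [Field k] [Monoid G] [AddCommGroup V]
    [Module k V] [FiniteDimensional k V] {ρ : Representation k G V} {W W' : Subrepresentation ρ}
    (h : IsCompl W.toSubmodule W'.toSubmodule) :
    ρ.character = W.toRepresentation.character + W'.toRepresentation.character := by
  ext g
  have hInternal := DirectSum.isInternal_submodule_iff_isCompl
    (fun b : Bool => cond b W.toSubmodule W'.toSubmodule) (i := true) (j := false)
    (by decide) (by ext b; cases b <;> simp) |>.mpr h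
  rw [Pi.add_apply, Representation.character, LinearMap.trace_eq_sum_trace_restrict hInternal
    (f := ρ g) (by rintro (_ | _); exacts [W'.apply_mem_toSubmodule g, W.apply_mem_toSubmodule g]),
    Fintype.sum_bool]
  rfl

theorem isCompl_toSubmodule {k G V : Type*} [Field k] [Monoid G] [AddCommGroup V] [Module k V]
    {ρ : Representation k G V} {W W' : Subrepresentation ρ} (h : IsCompl W W') :
    IsCompl W.toSubmodule W'.toSubmodule := by
  rw [isCompl_iff, disjoint_iff, codisjoint_iff, ← Subrepresentation.toSubmodule_inf,
    ← Subrepresentation.toSubmodule_sup, h.inf_eq_bot, h.sup_eq_top]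
  exact ⟨rfl, rfl⟩

theorem character_eq_zero_of_subsingleton {k G V : Type*} [Field k] [Monoid G] [AddCommGroup V]
    [Module k V] [Subsingleton V] (ρ : Representation k G V) : ρ.character = 0 :=
  funext fun g => by rw [Representation.character, Subsingleton.elim (ρ g) 0, map_zero]; rfl

/-! ### Virtual characters -/

section Characters

variable {G : Type} [Group G]

/-- The standard symmetric bilinear form on complex functions on a finite group. It avoids complex
conjugation by using `g⁻¹`, which makes no difference on characters. -/
noncomputable def charForm (G : Type) [Group G] [Fintype G] : LinearMap.BilinForm ℂ (G → ℂ) :=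
  LinearMap.mk₂ ℂ (fun f h => (Nat.card G : ℂ)⁻¹ * ∑ g, f g * h g⁻¹)
    (fun _ _ _ => by simp only [Pi.add_apply, add_mul, Finset.sum_add_distrib, mul_add])
    (fun _ _ _ => by simp only [Pi.smul_apply, smul_eq_mul, mul_assoc, ← Finset.mul_sum]; ring)
    (fun _ _ _ => by simp only [Pi.add_apply, mul_add, Finset.sum_add_distrib])
    (fun _ _ _ => by
      simp only [Pi.smul_apply, smul_eq_mul, mul_left_comm _ (_ : ℂ), ← Finset.mul_sum])

theorem charForm_apply [Fintype G] (f h : G → ℂ) :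
    charForm G f h = (Nat.card G : ℂ)⁻¹ * ∑ g, f g * h g⁻¹ :=
  rfl

theorem charForm_eq_ite [Fintype G] {χ ψ : G → ℂ} (hχ : χ ∈ IrrChar G) (hψ : ψ ∈ IrrChar G)
    [Decidable (χ = ψ)] : charForm G χ ψ = if χ = ψ then 1 else 0 := by
  classical
  have : Invertible (Nat.card G : ℂ) := invertibleOfNonzero (NeZero.ne _)
  have horth (V W : FDRep ℂ G) [Simple V] [Simple W] :
      charForm G V.character W.character = if Nonempty (V ≅ W) then 1 else 0 :=
    FDRep.char_orthonormal V W
  obtain ⟨V, hV, rfl⟩ := hχ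
  obtain ⟨W, hW, rfl⟩ := hψ
  change charForm G V.character W.character = if V.character = W.character then 1 else 0
  refine (horth V W).trans (if_congr ⟨fun ⟨i⟩ => FDRep.char_iso i, fun h => ?_⟩ rfl rfl)
  by_contra hVW
  have hone := horth V V
  rw [if_pos ⟨Iso.refl V⟩] at hone
  have hzero := horth V W
  rw [if_neg hVW, ← h, hone] at hzero
  exact one_ne_zero hzero

theorem linearIndependent_irrChar [Finite G] :
    LinearIndependent ℂ (Subtype.val : IrrChar G → G → ℂ) := by
  classical
  have := Fintype.ofFinite G
  refine LinearMap.BilinForm.linearIndependent_of_iIsOrtho (B := charForm G) ?_ fun χ => ?_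
  · exact fun χ ψ h => (charForm_eq_ite χ.2 ψ.2).trans (if_neg fun h' => h (Subtype.ext h'))
  · rw [charForm_eq_ite χ.2 χ.2, if_pos rfl]
    exact one_ne_zero

theorem finite_irrChar (G : Type) [Group G] [Finite G] : (IrrChar G).Finite :=
  linearIndependent_irrChar.finite

theorem charDeg_eq_of_apply_one {f : G → ℂ} {d : ℕ} (h : f 1 = d) : charDeg f = d := by
  rw [charDeg, h, Complex.natCast_re, Nat.floor_natCast]

theorem apply_one_of_mem_irrChar {χ : G → ℂ} (h : χ ∈ IrrChar G) : χ 1 = charDeg χ := by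
  obtain ⟨V, -, rfl⟩ := h
  have hV : V.character 1 = (Module.finrank ℂ V : ℂ) := FDRep.char_one V
  exact hV.trans (congrArg _ (charDeg_eq_of_apply_one hV).symm)

theorem charDeg_pos [Finite G] {χ : G → ℂ} (h : χ ∈ IrrChar G) : 0 < charDeg χ := by
  rw [Nat.pos_iff_ne_zero]
  intro h0
  have hne : χ ≠ 0 := linearIndependent_irrChar.ne_zero ⟨χ, h⟩
  have hχ1 := apply_one_of_mem_irrChar h
  obtain ⟨V, -, rfl⟩ := h
  have : Subsingleton V := Module.finrank_zero_iff (R := ℂ).mp <| by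
    rw [h0] at hχ1
    exact_mod_cast (FDRep.char_one V).symm.trans hχ1
  exact hne (character_eq_zero_of_subsingleton V.ρ)

theorem character_mem_irrChar [Finite G] {V : Type} [AddCommGroup V] [Module ℂ V]
    [FiniteDimensional ℂ V] (ρ : Representation ℂ G V) [ρ.IsIrreducible] :
    ρ.character ∈ IrrChar G := by
  have := Fintype.ofFinite G
  have : Invertible (Nat.card G : ℂ) := invertibleOfNonzero (NeZero.ne _)
  refine ⟨FDRep.of ρ, (FDRep.simple_iff_char_is_norm_one _).mpr ?_, rfl⟩
  have hnorm := Representation.char_orthonormal ρ ρ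
  rw [if_pos ⟨Representation.Equiv.refl ρ⟩, inv_mul_eq_one₀ (NeZero.ne _)] at hnorm
  exact hnorm.symm

theorem exists_isCompl_of_not_isIrreducible [Finite G] {V : Type*} [AddCommGroup V] [Module ℂ V]
    [Nontrivial V] (ρ : Representation ℂ G V) (h : ¬ρ.IsIrreducible) :
    ∃ W W' : Subrepresentation ρ, IsCompl W.toSubmodule W'.toSubmodule ∧
      W.toSubmodule ≠ ⊥ ∧ W.toSubmodule ≠ ⊤ := by
  have : NeZero (Nat.card G : ℂ) := ⟨NeZero.ne _⟩
  have : Nontrivial (Subrepresentation ρ) :=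
    ⟨⊥, ⊤, fun h => bot_ne_top (congrArg Subrepresentation.toSubmodule h)⟩
  obtain ⟨W, hbot, htop⟩ : ∃ W : Subrepresentation ρ, W ≠ ⊥ ∧ W ≠ ⊤ := by
    by_contra! hW
    exact h { eq_bot_or_eq_top := fun W => or_iff_not_imp_left.mpr (hW W) }
  obtain ⟨W', hc⟩ := exists_isCompl W
  exact ⟨W, W', isCompl_toSubmodule hc,
    fun h => hbot (Subrepresentation.toSubmodule_injective h),
    fun h => htop (Subrepresentation.toSubmodule_injective h)⟩

theorem character_mem_span_irrChar [Finite G] {V : Type} [AddCommGroup V] [Module ℂ V]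
    [FiniteDimensional ℂ V] (ρ : Representation ℂ G V) :
    ρ.character ∈ Submodule.span ℤ (IrrChar G) := by
  induction hn : Module.finrank ℂ V using Nat.strong_induction_on generalizing V with
  | _ n ih =>
    subst hn
    rcases subsingleton_or_nontrivial V with _ | _
    · rw [character_eq_zero_of_subsingleton]
      exact zero_mem _
    by_cases hirr : ρ.IsIrreducible
    · exact Submodule.subset_span (character_mem_irrChar ρ)
    obtain ⟨W, W', hc, hbot, htop⟩ := exists_isCompl_of_not_isIrreducible ρ hirr
    have hsum := Submodule.finrank_add_eq_of_isCompl hc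
    have hlt := Submodule.finrank_lt htop
    have hpos := Submodule.one_le_finrank_iff.mpr hbot
    rw [character_eq_add_of_isCompl hc]
    exact add_mem (ih _ hlt _ rfl) (ih _ (by lia) _ rfl)

/-- The ring of virtual characters of `G`, generated by the characters of finite-dimensional
representations. -/
def virtualChar (G : Type) [Group G] : Subring (G → ℂ) :=
  Subring.closure {f | ∃ V : FDRep ℂ G, f = V.character}

theorem character_mem_virtualChar {V : Type} [AddCommGroup V] [Module ℂ V] [FiniteDimensional ℂ V]
    (ρ : Representation ℂ G V) : ρ.character ∈ virtualChar G :=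
  Subring.subset_closure ⟨FDRep.of ρ, rfl⟩

theorem mem_virtualChar_of_mem_irrChar {χ : G → ℂ} (h : χ ∈ IrrChar G) : χ ∈ virtualChar G := by
  obtain ⟨V, -, rfl⟩ := h
  exact character_mem_virtualChar V.ρ

theorem comp_mem_virtualChar {H : Type} [Group H] (φ : G →* H) {f : H → ℂ}
    (hf : f ∈ virtualChar H) : f ∘ φ ∈ virtualChar G := by
  suffices virtualChar H ≤ (virtualChar G).comap (RingHom.pi fun g => Pi.evalRingHom _ (φ g)) from
    this hf
  refine Subring.closure_le.mpr ?_
  rintro _ ⟨V, rfl⟩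
  exact character_mem_virtualChar (V.ρ.comp φ)

theorem dual_mem_virtualChar {f : G → ℂ} (hf : f ∈ virtualChar G) :
    (fun g => f g⁻¹) ∈ virtualChar G := by
  suffices virtualChar G ≤ (virtualChar G).comap (RingHom.pi fun g => Pi.evalRingHom _ g⁻¹) from
    this hf
  refine Subring.closure_le.mpr ?_
  rintro _ ⟨V, rfl⟩
  have hdual : (fun g => V.character g⁻¹) = (Representation.dual V.ρ).character :=
    funext fun g => (FDRep.char_dual V g).symm
  exact (congrArg (· ∈ virtualChar G) hdual).mpr (character_mem_virtualChar _)

open MonoidalCategory in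
theorem virtualChar_le_span_irrChar [Finite G] {f : G → ℂ} (hf : f ∈ virtualChar G) :
    f ∈ Submodule.span ℤ (IrrChar G) := by
  rw [virtualChar, Subring.mem_closure_iff] at hf
  refine (AddSubgroup.closure_le (Submodule.span ℤ (IrrChar G)).toAddSubgroup).mpr ?_ hf
  intro f hf
  obtain ⟨V, rfl⟩ : ∃ V : FDRep ℂ G, f = V.character := by
    induction hf using Submonoid.closure_induction with
    | mem _ hf => exact hf
    | one => exact ⟨FDRep.of (Representation.trivial ℂ G ℂ), by ext; simp [FDRep.character]⟩
    | mul _ _ _ _ hf hh =>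
      obtain ⟨V, rfl⟩ := hf
      obtain ⟨W, rfl⟩ := hh
      exact ⟨V ⊗ W, (FDRep.char_tensor V W).symm⟩
  exact character_mem_span_irrChar V.ρ

theorem charForm_linearCombination_self [Fintype G] (l : IrrChar G →₀ ℤ) :
    charForm G (Finsupp.linearCombination ℤ Subtype.val l)
      (Finsupp.linearCombination ℤ Subtype.val l) = ∑ χ ∈ l.support, (l χ : ℂ) ^ 2 := by
  classical
  simp only [Finsupp.linearCombination_apply, Finsupp.sum, map_sum, LinearMap.sum_apply,
    ← Int.cast_smul_eq_zsmul ℂ, map_smul, LinearMap.smul_apply, smul_eq_mul]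
  refine Finset.sum_congr rfl fun χ hχ => ?_
  rw [Finset.sum_eq_single χ, charForm_eq_ite χ.2 χ.2, if_pos rfl, mul_one, sq]
  · exact fun ψ _ hne => by
      rw [charForm_eq_ite ψ.2 χ.2, if_neg (fun h => hne (Subtype.ext h)), mul_zero]
  · exact fun h => absurd hχ h

theorem eq_single_of_sum_sq_eq_one {ι : Type*} {l : ι →₀ ℤ}
    (h : ∑ i ∈ l.support, l i ^ 2 = 1) :
    ∃ i, l = Finsupp.single i 1 ∨ l = Finsupp.single i (-1) := by
  have hcard : l.support.card ≤ 1 := by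
    zify
    rw [← h, Finset.card_eq_sum_ones, Nat.cast_sum]
    refine Finset.sum_le_sum fun i hi => ?_
    have : 0 < l i ^ 2 := sq_pos_of_ne_zero (Finsupp.mem_support_iff.mp hi)
    exact_mod_cast this
  obtain ⟨i, hi⟩ : l.support.Nonempty := by
    rw [Finset.nonempty_iff_ne_empty]
    rintro hempty
    rw [hempty, Finset.sum_empty] at h
    exact zero_ne_one h
  have hsupp : l.support = {i} := Finset.eq_singleton_iff_unique_mem.mpr
    ⟨hi, fun j hj => Finset.card_le_one.mp hcard j hj i hi⟩
  have hl := (Finsupp.support_eq_singleton.mp hsupp).2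
  rw [hsupp, Finset.sum_singleton] at h
  rcases sq_eq_one_iff.mp h with hi | hi <;> rw [hi] at hl
  exacts [⟨i, Or.inl hl⟩, ⟨i, Or.inr hl⟩]

/-- The irreducible characters of degree `d`. -/
def irrCharOfDeg (G : Type) [Group G] (d : ℕ) : Set (G → ℂ) :=
  {χ ∈ IrrChar G | charDeg χ = d}

theorem finite_irrCharOfDeg (G : Type) [Group G] [Finite G] (d : ℕ) : (irrCharOfDeg G d).Finite :=
  (finite_irrChar G).subset (Set.sep_subset _ _)

theorem mem_irrCharOfDeg_of_charForm_self_eq_one [Fintype G] {f : G → ℂ} (hf : f ∈ virtualChar G)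
    (hnorm : charForm G f f = 1) {d : ℕ} (hd : f 1 = d) : f ∈ irrCharOfDeg G d := by
  refine ⟨?_, charDeg_eq_of_apply_one hd⟩
  obtain ⟨l, rfl⟩ := (Finsupp.mem_span_iff_linearCombination ℤ _ _).mp
    (virtualChar_le_span_irrChar hf)
  rw [charForm_linearCombination_self] at hnorm
  obtain ⟨χ, rfl | rfl⟩ := eq_single_of_sum_sq_eq_one (l := l) (by exact_mod_cast hnorm)
  · simp
  · have hpos := charDeg_pos χ.2
    rw [Finsupp.linearCombination_single, neg_one_smul, Pi.neg_apply,
      apply_one_of_mem_irrChar χ.2] at hd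
    have : ((charDeg χ.1 + d : ℕ) : ℂ) = 0 := by push_cast; rw [← hd, add_neg_cancel]
    have := Nat.cast_eq_zero.mp this
    lia

end Characters

section CharForm

variable {G H : Type} [Group G] [Group H] [Fintype G] [Fintype H]

theorem average_comp_of_surjective {φ : H →* G} (hφ : Function.Surjective φ) (F : G → ℂ) :
    (Nat.card H : ℂ)⁻¹ * ∑ x, F (φ x) = (Nat.card G : ℂ)⁻¹ * ∑ g, F g := by
  classical
  set c := Finset.card {x | φ x = 1}
  have hsum (E : G → ℂ) : ∑ x, E (φ x) = c * ∑ g, E g := by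
    rw [Finset.sum_comp, Finset.image_univ_of_surjective hφ, Finset.mul_sum]
    refine Finset.sum_congr rfl fun g _ => ?_
    rw [MonoidHom.card_fiber_eq_of_mem_range φ (hφ g) (hφ 1), nsmul_eq_mul]
  have hcard : (Nat.card H : ℂ) = c * Nat.card G := by
    simpa [Nat.card_eq_fintype_card] using hsum 1
  have hc : (c : ℂ) ≠ 0 := left_ne_zero_of_mul (hcard ▸ NeZero.ne (Nat.card H : ℂ))
  rw [hsum, hcard, mul_inv, mul_mul_mul_comm, inv_mul_cancel₀ hc, one_mul]

theorem charForm_comp_of_surjective {φ : H →* G} (hφ : Function.Surjective φ) (f h : G → ℂ) :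
    charForm H (f ∘ φ) (h ∘ φ) = charForm G f h := by
  simpa only [charForm_apply, Function.comp_apply, map_inv] using
    average_comp_of_surjective hφ fun g => f g * h g⁻¹

theorem charForm_prod (a a' : G → ℂ) (b b' : H → ℂ) :
    charForm (G × H) (fun x => a x.1 * b x.2) (fun x => a' x.1 * b' x.2) =
      charForm G a a' * charForm H b b' := by
  simp only [charForm_apply, Nat.card_prod, Nat.cast_mul, mul_inv, Prod.fst_inv, Prod.snd_inv]
  rw [mul_mul_mul_comm, Finset.sum_mul_sum, Fintype.sum_prod_type]
  simp only [mul_mul_mul_comm]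

theorem charForm_monoidHom_self (l : G →* ℂ) : charForm G l l = 1 := by
  simp only [charForm_apply, ← map_mul, mul_inv_cancel, map_one, Finset.sum_const,
    Finset.card_univ, nsmul_one, Nat.card_eq_fintype_card]
  exact inv_mul_cancel₀ (NeZero.ne _)

theorem charForm_comp_pow_of_coprime {n : ℕ} (hn : (Nat.card G).Coprime n) (f h : G → ℂ) :
    charForm G (fun g => f (g ^ n)) (fun g => h (g ^ n)) = charForm G f h := by
  simp only [charForm_apply, inv_pow]
  exact congrArg _ ((powCoprime hn).sum_comp fun g => f g * h g⁻¹)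

end CharForm

/-! ### Permutation characters and central elements -/

section Permutation

variable {G : Type} [Group G]

theorem matrix_trace_mem_virtualChar {n : Type} [Fintype n] [DecidableEq n]
    (R : G →* Matrix n n ℂ) : (fun g => (R g).trace) ∈ virtualChar G := by
  convert character_mem_virtualChar
    ((Matrix.toLinAlgEquiv' : Matrix n n ℂ ≃ₐ[ℂ] _).toMonoidHom.comp R) using 1
  ext g
  exact (Matrix.trace_toLin'_eq (R g)).symm

variable (X : Type) [MulAction G X]

theorem card_fixedBy_mem_virtualChar [Finite X] :
    (fun g => (Nat.card (MulAction.fixedBy X g) : ℂ)) ∈ virtualChar G := by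
  classical
  have := Fintype.ofFinite X
  let R : G →* Matrix X X ℂ :=
    { toFun g := (MulAction.toPermHom G X g⁻¹).permMatrix ℂ
      map_one' := by rw [inv_one, map_one, Matrix.permMatrix_one]
      map_mul' g h := by rw [mul_inv_rev, map_mul, Matrix.permMatrix_mul] }
  convert matrix_trace_mem_virtualChar R using 2 with g
  rw [show R g = (MulAction.toPermHom G X g⁻¹).permMatrix ℂ from rfl, Matrix.trace_permutation,
    ← MulAction.fixedBy_inv]
  rfl

theorem sum_natCard_fixedBy [Fintype G] [Finite X] :
    ∑ g : G, Nat.card (MulAction.fixedBy X g) =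
      Nat.card (MulAction.orbitRel.Quotient G X) * Nat.card G := by
  classical
  have := Fintype.ofFinite X
  simpa only [Nat.card_eq_fintype_card] using
    MulAction.sum_card_fixedBy_eq_card_orbits_mul_card_group G X

theorem sum_natCard_fixedBy_of_isPretransitive [Fintype G] [Finite X] [Nonempty X]
    [MulAction.IsPretransitive G X] : ∑ g : G, Nat.card (MulAction.fixedBy X g) = Nat.card G := by
  have : Subsingleton (MulAction.orbitRel.Quotient G X) :=
    (MulAction.pretransitive_iff_subsingleton_quotient G X).mp inferInstance
  have : Nonempty (MulAction.orbitRel.Quotient G X) := Nonempty.map Quotient.mk'' ‹_›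
  rw [sum_natCard_fixedBy, Nat.card_unique, one_mul]

theorem card_orbitRel_quotient_prod [Nontrivial X] [MulAction.IsMultiplyPretransitive G X 2] :
    Nat.card (MulAction.orbitRel.Quotient G (X × X)) = 2 := by
  have : MulAction.IsPretransitive G X := MulAction.isPretransitive_of_is_two_pretransitive
  obtain ⟨x, y, hxy⟩ := exists_pair_ne X
  refine Nat.card_eq_two_iff.mpr ⟨Quotient.mk'' (x, x), Quotient.mk'' (x, y), ?_, ?_⟩
  · intro h
    obtain ⟨g, hg⟩ := Quotient.exact' h
    exact hxy (MulAction.injective g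
      ((congrArg Prod.fst hg).trans (congrArg Prod.snd hg).symm))
  · refine Set.eq_univ_of_forall fun q => ?_
    induction q using Quotient.inductionOn' with
    | _ p =>
    obtain ⟨a, b⟩ := p
    by_cases hab : a = b
    · obtain ⟨g, hg⟩ := MulAction.exists_smul_eq G x a
      exact Or.inl (Quotient.sound' ⟨g, Prod.ext hg (hg.trans hab)⟩)
    · obtain ⟨g, hga, hgb⟩ := MulAction.is_two_pretransitive_iff.mp ‹_› hxy hab
      exact Or.inr (Quotient.sound' ⟨g, Prod.ext hga hgb⟩)

theorem sum_natCard_fixedBy_sq [Fintype G] [Finite X] [Nontrivial X]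
    [MulAction.IsMultiplyPretransitive G X 2] :
    ∑ g : G, Nat.card (MulAction.fixedBy X g) ^ 2 = 2 * Nat.card G := by
  rw [← card_orbitRel_quotient_prod (G := G) X, ← sum_natCard_fixedBy, card_orbitRel_quotient_prod]
  refine Finset.sum_congr rfl fun g _ => ?_
  rw [sq, ← Nat.card_prod]
  refine Nat.card_congr ((Equiv.Set.prod _ _).symm.trans (Equiv.setCongr ?_))
  ext p
  exact (Prod.ext_iff (x := g • p) (y := p)).symm

theorem charForm_card_fixedBy_sub_one_self [Fintype G] [Finite X] [Nontrivial X]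
    [MulAction.IsMultiplyPretransitive G X 2] :
    charForm G (fun g => (Nat.card (MulAction.fixedBy X g) : ℂ) - 1)
      (fun g => (Nat.card (MulAction.fixedBy X g) : ℂ) - 1) = 1 := by
  have : MulAction.IsPretransitive G X := MulAction.isPretransitive_of_is_two_pretransitive
  have h1 : ∑ g : G, (Nat.card (MulAction.fixedBy X g) : ℂ) = Nat.card G := by
    exact_mod_cast sum_natCard_fixedBy_of_isPretransitive X
  have h2 : ∑ g : G, (Nat.card (MulAction.fixedBy X g) : ℂ) ^ 2 = 2 * Nat.card G := by
    exact_mod_cast sum_natCard_fixedBy_sq X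
  simp only [charForm_apply, MulAction.fixedBy_inv, ← sq, sub_sq, Finset.sum_add_distrib,
    Finset.sum_sub_distrib, h2, mul_one, ← Finset.mul_sum, h1, one_pow, Finset.sum_const,
    Finset.card_univ, nsmul_one, ← Nat.card_eq_fintype_card]
  rw [sub_self, zero_add, inv_mul_cancel₀ (NeZero.ne _)]

end Permutation

section Schur

variable {G : Type} [Group G]

theorem exists_irrChar_apply_ne [Finite G] {z : G} (hz : z ≠ 1) : ∃ χ ∈ IrrChar G, χ z ≠ χ 1 := by
  by_contra! h
  have hspan : ∀ f ∈ virtualChar G, f z = f 1 := by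
    intro f hf
    have hf' := virtualChar_le_span_irrChar hf
    clear hf
    induction hf' using Submodule.span_induction with
    | mem χ hχ => exact h χ hχ
    | zero => rfl
    | add _ _ _ _ h₁ h₂ => exact congrArg₂ (· + ·) h₁ h₂
    | smul n _ _ h₁ => exact congrArg (n • ·) h₁
  have hreg := hspan _ (card_fixedBy_mem_virtualChar G)
  have hempty : MulAction.fixedBy G z = ∅ :=
    Set.eq_empty_of_forall_notMem fun g hg => hz (mul_eq_right.mp hg)
  rw [hempty, MulAction.fixedBy_one_eq_univ, Nat.card_univ, Nat.card_of_isEmpty,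
    Nat.cast_zero] at hreg
  exact NeZero.ne (Nat.card G : ℂ) hreg.symm

theorem exists_eq_smul_one_of_simple {V : FDRep ℂ G} [Simple V] {z : G}
    (hz : z ∈ Subgroup.center G) : ∃ c : ℂ, V.ρ z = c • 1 := by
  have hrank : Module.finrank ℂ (Representation.linHom V.ρ V.ρ).invariants = 1 := by
    rw [(Representation.linHom.invariantsEquivFDRepHom V V).finrank_eq,
      FDRep.finrank_hom_simple_simple, if_pos ⟨Iso.refl V⟩]
  have hmem (T : Module.End ℂ V) : T ∈ (Representation.linHom V.ρ V.ρ).invariants ↔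
      ∀ g, Commute T (V.ρ g) := forall_congr' fun g =>
    Representation.linHom.mem_invariants_iff_comm (X := Rep.of V.ρ) (Y := Rep.of V.ρ) T g
  have : Nontrivial (Representation.linHom V.ρ V.ρ).invariants :=
    Module.nontrivial_of_finrank_pos (hrank ▸ one_pos)
  have : Nontrivial (Module.End ℂ V) := (Subtype.val_injective
    (p := (· ∈ (Representation.linHom V.ρ V.ρ).invariants))).nontrivial
  obtain ⟨c, hc⟩ := (finrank_eq_one_iff_of_nonzero'
    (⟨1, (hmem 1).mpr fun g => Commute.one_left _⟩ : (Representation.linHom V.ρ V.ρ).invariants)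
    (Subtype.coe_ne_coe.mp one_ne_zero)).mp hrank ⟨V.ρ z, (hmem _).mpr fun g =>
      Commute.map (Subgroup.mem_center_iff.mp hz g).symm V.ρ⟩
  exact ⟨c, (congrArg Subtype.val hc).symm⟩

theorem exists_eq_smul_one_of_commute {V : Type*} [AddCommGroup V] [Module ℂ V]
    [FiniteDimensional ℂ V] {ρ : Representation ℂ G V} [ρ.IsIrreducible] {T : Module.End ℂ V}
    (hT : ∀ g, Commute T (ρ g)) : ∃ c : ℂ, T = c • 1 := by
  let f := T.intertwiningMap_of_isIntertwiningMap (σ := ρ) (ρ := ρ)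
    fun g v => LinearMap.congr_fun (hT g) v
  obtain ⟨c, hc⟩ :=
    (Representation.IsIrreducible.algebraMap_intertwiningMap_bijective_of_isAlgClosed).2 f
  exact ⟨c, congrArg Representation.IntertwiningMap.toLinearMap hc.symm⟩

end Schur

/-! ### Two-dimensional representations of `SL(2, 5)` -/

section DetOne

open Polynomial Polynomial.Chebyshev

variable {R : Type*} [CommRing R] {X : Matrix (Fin 2) (Fin 2) R}

theorem sq_eq_of_det_eq_one (hX : X.det = 1) : X ^ 2 = X.trace • X - 1 := by
  nontriviality R
  have h := X.aeval_self_charpoly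
  simp only [Matrix.charpoly_fin_two, hX, map_one, map_add, map_sub, map_mul, map_pow, aeval_X,
    Polynomial.aeval_C, Algebra.algebraMap_eq_smul_one, smul_mul_assoc, one_mul] at h
  rw [← sub_eq_zero, ← h]
  abel

theorem pow_add_two_of_det_eq_one (hX : X.det = 1) (n : ℕ) :
    X ^ (n + 2) = X.trace • X ^ (n + 1) - X ^ n := by
  rw [pow_add, sq_eq_of_det_eq_one hX, mul_sub, mul_smul_comm, mul_one, pow_succ]

theorem pow_eq_of_det_eq_one (hX : X.det = 1) (n : ℕ) :
    X ^ (n + 1) = (S R n).eval X.trace • X - (S R (n - 1)).eval X.trace • 1 := by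
  induction n with
  | zero => simp
  | succ n ih =>
    rw [pow_succ, ih, sub_mul, smul_mul_assoc, ← sq, sq_eq_of_det_eq_one hX, smul_one_mul,
      smul_sub, smul_smul, sub_right_comm, ← sub_smul, Nat.cast_succ, S_add_one, eval_sub, eval_mul,
      eval_X, add_sub_cancel_right, mul_comm]

theorem trace_pow_of_det_eq_one (hX : X.det = 1) (n : ℕ) :
    (X ^ n).trace = (Chebyshev.C R n).eval X.trace := by
  induction n using Nat.twoStepInduction with
  | zero => simp
  | one => simp
  | more n ih ih' =>
    rw [pow_add_two_of_det_eq_one hX, Matrix.trace_sub, Matrix.trace_smul, ih, ih',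
      Nat.cast_add n 2, Nat.cast_ofNat, C_add_two, eval_sub, eval_mul, eval_X, smul_eq_mul,
      Nat.cast_succ]

theorem trace_adjugate_fin_two (X : Matrix (Fin 2) (Fin 2) R) : X.adjugate.trace = X.trace := by
  rw [Matrix.adjugate_fin_two, Matrix.trace_fin_two, Matrix.trace_fin_two, add_comm]
  rfl

end DetOne

section Perfect

theorem eq_one_of_isPerfect {G N : Type*} [Group G] [Group.IsPerfect G] [Monoid N] {ρ : G →* N}
    (h : ∀ a b, Commute (ρ a) (ρ b)) : ρ = 1 := by
  have hker : commutator G ≤ ρ.ker := by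
    rw [commutator_def, Subgroup.commutator_le]
    intro a _ b _
    rw [MonoidHom.mem_ker, commutatorElement_def, map_mul, map_mul, map_mul, (h a b).eq,
      mul_assoc (ρ b), ← map_mul, mul_inv_cancel, map_one, mul_one, ← map_mul, mul_inv_cancel,
      map_one]
  rw [Group.IsPerfect.commutator_eq_top] at hker
  exact MonoidHom.ext fun g => hker (Subgroup.mem_top g)

theorem normal_eq_top_of_sup_center_eq_top {G : Type*} [Group G] [Group.IsPerfect G]
    {N : Subgroup G} [N.Normal] (h : N ⊔ Subgroup.center G = ⊤) : N = ⊤ := by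
  have hcomm (a b : G) : Commute (QuotientGroup.mk' N a) (QuotientGroup.mk' N b) := by
    obtain ⟨n, hn, z, hz, rfl⟩ := Subgroup.mem_sup_of_normal_left.mp (h ▸ Subgroup.mem_top a)
    have hn : QuotientGroup.mk' N n = 1 := (QuotientGroup.eq_one_iff n).mpr hn
    rw [map_mul, hn, one_mul]
    exact Commute.map (Subgroup.mem_center_iff.mp hz b).symm _
  rw [← QuotientGroup.ker_mk' N, eq_one_of_isPerfect hcomm, MonoidHom.ker_one]

open scoped MatrixGroups

variable {F : Type*} [Field F]

theorem normal_le_center_or_eq_top [Group.IsPerfect SL(2, F)] [IsSimpleGroup PSL(2, F)]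
    (N : Subgroup SL(2, F)) [N.Normal] : N ≤ Subgroup.center _ ∨ N = ⊤ := by
  have hN : (N.map (QuotientGroup.mk' (Subgroup.center SL(2, F)))).Normal :=
    Subgroup.Normal.map ‹_› _ (QuotientGroup.mk'_surjective _)
  rcases hN.eq_bot_or_eq_top with h | h
  · rw [Subgroup.map_eq_bot_iff, QuotientGroup.ker_mk'] at h
    exact Or.inl h
  · have h := congrArg (Subgroup.comap (QuotientGroup.mk' _)) h
    rw [Subgroup.comap_map_eq, QuotientGroup.ker_mk', Subgroup.comap_top] at h
    exact Or.inr (normal_eq_top_of_sup_center_eq_top h)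

theorem mem_center_of_commute_map [Group.IsPerfect SL(2, F)] [IsSimpleGroup PSL(2, F)] {H : Type*}
    [Group H] {ρ : SL(2, F) →* H} (hρ : ρ ≠ 1) {g : SL(2, F)} (hg : ∀ x, Commute (ρ g) (ρ x)) :
    g ∈ Subgroup.center SL(2, F) := by
  have hmem (y : SL(2, F)) : y ∈ (Subgroup.center ρ.range).comap ρ.rangeRestrict ↔
      ∀ x, Commute (ρ y) (ρ x) := by
    rw [Subgroup.mem_comap, Subgroup.mem_center_iff, ρ.rangeRestrict_surjective.forall]
    exact forall_congr' fun x => Subtype.ext_iff.trans eq_comm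
  rcases normal_le_center_or_eq_top ((Subgroup.center ρ.range).comap ρ.rangeRestrict) with h | h
  · exact h ((hmem g).mpr hg)
  · exact absurd (eq_one_of_isPerfect fun a => (hmem a).mp (h ▸ Subgroup.mem_top a)) hρ

end Perfect

section DegreeTwo

open scoped MatrixGroups

variable {F : Type*} [Field F] [Group.IsPerfect SL(2, F)] [IsSimpleGroup PSL(2, F)]

theorem det_eq_one_of_isPerfect {G n R : Type*} [Group G] [Group.IsPerfect G] [Fintype n]
    [DecidableEq n] [CommRing R] (ρ : G →* Matrix n n R) (g : G) : (ρ g).det = 1 :=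
  DFunLike.congr_fun
    (eq_one_of_isPerfect (ρ := Matrix.detMonoidHom.comp ρ) fun _ _ => Commute.all _ _) g

theorem ne_smul_one_of_notMem_center {n R : Type*} [Fintype n] [DecidableEq n] [CommRing R]
    {ρ : SL(2, F) →* Matrix n n R} (hρ : ρ ≠ 1) {g : SL(2, F)} (hg : g ∉ Subgroup.center SL(2, F))
    (c : R) : ρ g ≠ c • 1 := by
  intro hc
  refine hg (mem_center_of_commute_map (ρ := ρ.toHomUnits) (fun h => hρ ?_) fun x => ?_)
  · exact MonoidHom.ext fun x => congrArg Units.val (DFunLike.congr_fun h x)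
  · refine Units.ext ?_
    change ρ g * ρ x = ρ x * ρ g
    rw [hc, smul_one_mul, mul_smul_one]

theorem eq_zero_and_eq_zero_of_smul_eq_smul_one {k A : Type*} [Field k] [Ring A] [Nontrivial A]
    [Algebra k A] {X : A} (hX : ∀ c : k, X ≠ c • 1) {a b : k} (h : a • X = b • 1) :
    a = 0 ∧ b = 0 := by
  have ha : a = 0 := by
    by_contra ha
    exact hX (a⁻¹ * b) (by rw [mul_smul, ← h, inv_smul_smul₀ ha])
  refine ⟨ha, ?_⟩
  rw [ha, zero_smul] at h
  exact (smul_eq_zero.mp h.symm).resolve_right one_ne_zero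

open Polynomial Polynomial.Chebyshev in
theorem chebyshevS_eval_trace_of_pow_eq_smul_one {k : Type*} [Field k]
    {X : Matrix (Fin 2) (Fin 2) k} (hdet : X.det = 1) (hX : ∀ c : k, X ≠ c • 1) {n : ℕ} {c : k}
    (h : X ^ (n + 1) = c • 1) :
    (S k n).eval X.trace = 0 ∧ (S k (n - 1)).eval X.trace = -c := by
  rw [pow_eq_of_det_eq_one hdet, sub_eq_iff_eq_add, ← add_smul] at h
  obtain ⟨h₁, h₂⟩ := eq_zero_and_eq_zero_of_smul_eq_smul_one hX h
  exact ⟨h₁, eq_neg_of_add_eq_zero_right h₂⟩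

end DegreeTwo

section SL25

open scoped MatrixGroups

open Polynomial Polynomial.Chebyshev

instance : Fact (Nat.Prime 5) :=
  ⟨Nat.prime_five⟩

instance : Group.IsPerfect SL(2, ZMod 5) :=
  ⟨Matrix.SL2.commutator_eq_top (a := 2) (by decide) (by decide)⟩

instance : IsSimpleGroup PSL(2, ZMod 5) :=
  Matrix.ProjectiveSpecialLinearGroup.rank_two_simple' ⟨2, by decide, by decide⟩

theorem eq_one_or_eq_neg_one_of_mem_center {F : Type*} [Field F] {g : SL(2, F)}
    (hg : g ∈ Subgroup.center SL(2, F)) : g = 1 ∨ g = -1 := by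
  obtain ⟨r, hr, hg⟩ := Matrix.SpecialLinearGroup.mem_center_iff.mp hg
  rcases sq_eq_one_iff.mp hr with rfl | rfl
  · exact Or.inl (Subtype.ext (by rw [← hg, map_one]; rfl))
  · exact Or.inr (Subtype.ext (by rw [← hg, map_neg, map_one]; rfl))

theorem trace_neg_SL {n R : Type*} [Fintype n] [DecidableEq n] [Fact (Even (Fintype.card n))]
    [CommRing R] (g : Matrix.SpecialLinearGroup n R) : (-g).1.trace = -g.1.trace :=
  Matrix.trace_neg g.1

theorem coe_pow_eq_of_chebyshevS_eval_trace_eq_zero {R : Type*} [CommRing R] {g : SL(2, R)} {n : ℕ}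
    (h : (S R n).eval g.1.trace = 0) : (g ^ (n + 1)).1 = -(S R (n - 1)).eval g.1.trace • 1 := by
  rw [Matrix.SpecialLinearGroup.coe_pow, pow_eq_of_det_eq_one g.2, h, zero_smul, zero_sub, neg_smul]

theorem sq_eq_neg_one_of_trace_eq_zero {R : Type*} [CommRing R] {g : SL(2, R)}
    (hg : g.1.trace = 0) : g ^ 2 = -1 :=
  Subtype.ext <| (coe_pow_eq_of_chebyshevS_eval_trace_eq_zero (n := 1) (by simp [hg])).trans
    (by simp)

theorem pow_three_eq_one_of_trace_eq_neg_one {R : Type*} [CommRing R] {g : SL(2, R)}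
    (hg : g.1.trace = -1) : g ^ 3 = 1 :=
  Subtype.ext <| (coe_pow_eq_of_chebyshevS_eval_trace_eq_zero (n := 2) (by simp [hg, S_two])).trans
    (by simp [hg])

theorem pow_char_eq_one_of_trace_eq_two {p : ℕ} [NeZero p] {R : Type*} [CommRing R] [CharP R p]
    {g : SL(2, R)} (hg : g.1.trace = 2) : g ^ p = 1 := by
  obtain ⟨n, rfl⟩ := Nat.exists_eq_succ_of_ne_zero (NeZero.ne p)
  have hp : (n : R) + 1 = 0 := by exact_mod_cast CharP.cast_eq_zero R (n + 1)
  refine Subtype.ext ((coe_pow_eq_of_chebyshevS_eval_trace_eq_zero (n := n) ?_).trans ?_)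
  · rw [hg, S_eval_two, Int.cast_natCast, hp]
  · rw [hg, S_eval_two, Int.cast_sub, Int.cast_natCast, Int.cast_one, sub_add_cancel,
      neg_eq_of_add_eq_zero_right hp, one_smul]
    rfl

/-- The order of the image of `g` in `PSL(2, 5)`, read off from the trace of `g`. -/
def pslOrder (g : SL(2, ZMod 5)) : ℕ :=
  if g = 1 ∨ g = -1 then 1
  else if g.1.trace = 0 then 2
  else if g.1.trace = 1 ∨ g.1.trace = -1 then 3
  else 5

theorem map_pslOrder_univ : (Finset.univ : Finset SL(2, ZMod 5)).val.map pslOrder =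
    .replicate 2 1 + .replicate 30 2 + .replicate 40 3 + .replicate 48 5 := by
  decide +kernel

theorem exists_conj_of_trace_eq_two : ∀ g : SL(2, ZMod 5), g.1.trace = 2 → g ≠ 1 →
    ∃ x, x * .transvection zero_ne_one 1 * x⁻¹ = g ∨
      x * .transvection zero_ne_one 1 ^ 7 * x⁻¹ = g := by
  decide +kernel

theorem zmod_five_cases : ∀ t : ZMod 5, t = 0 ∨ (t = -1 ∨ -t = -1) ∨ (t = 2 ∨ -t = 2) := by
  decide

section DegreeTwoValues

variable {ρ : SL(2, ZMod 5) →* Matrix (Fin 2) (Fin 2) ℂ} {g : SL(2, ZMod 5)}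

theorem map_ne_smul_one (hρ : ρ ≠ 1) (h₁ : g ≠ 1) (h₂ : g ≠ -1) (c : ℂ) : ρ g ≠ c • 1 :=
  ne_smul_one_of_notMem_center hρ
    (fun h => (eq_one_or_eq_neg_one_of_mem_center h).elim h₁ h₂) c

theorem chebyshevS_eval_trace_map_of_pow_eq_one (hρ : ρ ≠ 1) (h₁ : g ≠ 1) (h₂ : g ≠ -1) {n : ℕ}
    (h : g ^ (n + 1) = 1) :
    (S ℂ n).eval (ρ g).trace = 0 ∧ (S ℂ (n - 1)).eval (ρ g).trace = -1 :=
  chebyshevS_eval_trace_of_pow_eq_smul_one (det_eq_one_of_isPerfect ρ g)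
    (map_ne_smul_one hρ h₁ h₂) (by rw [← map_pow, h, map_one, one_smul])

theorem trace_map_of_trace_eq_zero (hρ : ρ ≠ 1) (hg : g.1.trace = 0) : (ρ g).trace = 0 := by
  have hg4 : g ^ (3 + 1) = 1 := by rw [pow_mul g 2 2, sq_eq_neg_one_of_trace_eq_zero hg, neg_one_sq]
  have h := (chebyshevS_eval_trace_map_of_pow_eq_one hρ (by rintro rfl; revert hg; decide)
    (by rintro rfl; revert hg; decide) hg4).2
  norm_num [S_two] at h
  exact h

theorem map_neg_one_eq_neg_one (hρ : ρ ≠ 1) : ρ (-1) = -1 := by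
  let w : SL(2, ZMod 5) := ⟨!![0, 1; -1, 0], by decide⟩
  have hw : w.1.trace = 0 := by decide
  rw [← sq_eq_neg_one_of_trace_eq_zero hw, map_pow,
    sq_eq_of_det_eq_one (det_eq_one_of_isPerfect ρ w), trace_map_of_trace_eq_zero hρ hw, zero_smul,
    zero_sub]

theorem trace_map_of_trace_eq_neg_one (hρ : ρ ≠ 1) (hg : g.1.trace = -1) : (ρ g).trace = -1 := by
  have h := (chebyshevS_eval_trace_map_of_pow_eq_one hρ (by rintro rfl; revert hg; decide)
    (by rintro rfl; revert hg; decide) (pow_three_eq_one_of_trace_eq_neg_one hg)).2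
  norm_num at h
  exact h

theorem trace_map_of_trace_eq_two (hρ : ρ ≠ 1) (hg : g.1.trace = 2) (h₁ : g ≠ 1) :
    (ρ g).trace ^ 2 + (ρ g).trace = 1 := by
  obtain ⟨h4, h3⟩ := chebyshevS_eval_trace_map_of_pow_eq_one hρ (n := 4) h₁
    (by rintro rfl; revert hg; decide) (pow_char_eq_one_of_trace_eq_two hg)
  have hS : S ℂ 4 = X * S ℂ 3 - S ℂ 2 := S_add_two ℂ 2
  norm_num [hS, S_two] at h4 h3
  rw [h3] at h4
  linear_combination -h4

end DegreeTwoValues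

end SL25

section SpinCharacter

open scoped MatrixGroups

/-- `θ` has the properties of the two faithful irreducible characters of degree two of `SL(2, 5)`
that the argument needs. The seventh power map exchanges the two characters, because `7` is prime to
`120` and is not a square modulo `5`; the polynomial in `map_pow_seven` is the rescaled Chebyshev
polynomial of degree seven. -/
structure IsSpinCharacter (θ : SL(2, ZMod 5) → ℂ) : Prop where
  charForm_self : charForm SL(2, ZMod 5) θ θ = 1
  map_one : θ 1 = 2
  map_neg g : θ (-g) = -θ g
  map_inv g : θ g⁻¹ = θ g
  map_conj x g : θ (x * g * x⁻¹) = θ g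
  map_pow_seven g : θ (g ^ 7) = θ g ^ 7 - 7 * θ g ^ 5 + 14 * θ g ^ 3 - 7 * θ g
  of_trace_eq_zero {g} : g.1.trace = 0 → θ g = 0
  of_trace_eq_neg_one {g} : g.1.trace = -1 → θ g = -1
  of_trace_eq_two {g} : g.1.trace = 2 → g ≠ 1 → θ g ^ 2 + θ g = 1

theorem natCard_SL25 : Nat.card SL(2, ZMod 5) = 120 := by
  rw [Nat.card_eq_fintype_card, ← Finset.card_univ, Finset.card_def,
    ← Multiset.card_map pslOrder, map_pslOrder_univ]
  rfl

open Polynomial in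
theorem chebyshevC_seven_eval {R : Type*} [CommRing R] (x : R) :
    (Chebyshev.C R 7).eval x = x ^ 7 - 7 * x ^ 5 + 14 * x ^ 3 - 7 * x := by
  have hadd (n : ℤ) : (Chebyshev.C R (n + 2)).eval x =
      x * (Chebyshev.C R (n + 1)).eval x - (Chebyshev.C R n).eval x := by
    rw [Chebyshev.C_add_two, eval_sub, eval_mul, eval_X]
  have h2 : (Chebyshev.C R 2).eval x = x * x - 2 := by simpa using hadd 0
  have h3 := hadd 1
  have h4 := hadd 2
  have h5 := hadd 3
  have h6 := hadd 4
  have h7 := hadd 5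
  norm_num only [Chebyshev.C_one, eval_X] at h3 h4 h5 h6 h7
  rw [h7, h6, h5, h4, h3, h2]
  ring

theorem chebyshevC_seven_eval_of_sq_add_self_eq_one {R : Type*} [CommRing R] {x : R}
    (hx : x ^ 2 + x = 1) : x ^ 7 - 7 * x ^ 5 + 14 * x ^ 3 - 7 * x = -1 - x := by
  linear_combination (x ^ 5 - x ^ 4 - 5 * x ^ 3 + 4 * x ^ 2 + 5 * x - 1) * hx

theorem representation_eq_one_of_finrank_eq_one {k G V : Type*} [Field k] [Group G]
    [Group.IsPerfect G] [AddCommGroup V] [Module k V] {ρ : Representation k G V}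
    (hV : Module.finrank k V = 1) : ρ = 1 := by
  refine eq_one_of_isPerfect fun a b => ?_
  obtain ⟨c, hc, -⟩ := LinearMap.existsUnique_eq_smul_id_of_finrank_eq_one hV (ρ a)
  rw [hc]
  exact (Commute.one_left _).smul_left c

theorem isIrreducible_of_finrank_eq_two {G : Type} {V : Type*} [Group G] [Group.IsPerfect G]
    [Finite G] [AddCommGroup V] [Module ℂ V] {ρ : Representation ℂ G V}
    (hV : Module.finrank ℂ V = 2) (hρ : ρ ≠ 1) : ρ.IsIrreducible := by
  have : FiniteDimensional ℂ V := Module.finite_of_finrank_eq_succ hV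
  have : Nontrivial V := Module.nontrivial_of_finrank_eq_succ hV
  by_contra hirr
  obtain ⟨W, W', hc, hbot, htop⟩ := exists_isCompl_of_not_isIrreducible ρ hirr
  have hdim := Submodule.finrank_add_eq_of_isCompl hc
  have hpos := Submodule.one_le_finrank_iff.mpr hbot
  have hlt := Submodule.finrank_lt htop
  have hfix (U : Subrepresentation ρ) (hU : Module.finrank ℂ U.toSubmodule = 1) (g : G) :
      U.toSubmodule ≤ (ρ g).eqLocus LinearMap.id := fun v hv => congrArg Subtype.val
    (LinearMap.congr_fun (DFunLike.congr_fun (representation_eq_one_of_finrank_eq_one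
      (ρ := U.toRepresentation) hU) g) ⟨v, hv⟩)
  refine hρ (MonoidHom.ext fun g => LinearMap.eqLocus_eq_top.mp (top_le_iff.mp ?_))
  rw [← hc.sup_eq_top]
  exact sup_le (hfix W (by lia) g) (hfix W' (by lia) g)

theorem isSpinCharacter_character {V : Type} [AddCommGroup V] [Module ℂ V]
    {ρ : Representation ℂ SL(2, ZMod 5) V} (hV : Module.finrank ℂ V = 2) (hρ : ρ ≠ 1) :
    IsSpinCharacter ρ.character := by
  have := isIrreducible_of_finrank_eq_two hV hρ
  have : FiniteDimensional ℂ V := Module.finite_of_finrank_eq_succ hV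
  let e := LinearMap.toMatrixAlgEquiv (Module.finBasisOfFinrankEq ℂ V hV)
  let R : SL(2, ZMod 5) →* Matrix (Fin 2) (Fin 2) ℂ := (e : Module.End ℂ V →* _).comp ρ
  have hR : R ≠ 1 := fun h => hρ <| MonoidHom.ext fun g =>
    e.injective ((DFunLike.congr_fun h g).trans (map_one e).symm)
  have htrace (g) : ρ.character g = (R g).trace :=
    (LinearMap.trace_eq_matrix_trace ℂ (Module.finBasisOfFinrankEq ℂ V hV) (ρ g))
  have hdet (g) : (R g).det = 1 := det_eq_one_of_isPerfect R g
  have hχ := character_mem_irrChar ρ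
  constructor
  · exact (charForm_eq_ite hχ hχ).trans (if_pos rfl)
  · rw [ρ.char_one, hV, Nat.cast_ofNat]
  · intro g
    rw [htrace, htrace, ← neg_one_mul, map_mul, map_neg_one_eq_neg_one hR, neg_one_mul,
      Matrix.trace_neg]
  · intro g
    have hinv : R g⁻¹ = (R g).adjugate := by
      rw [← mul_one (R g⁻¹), ← one_smul ℂ (1 : Matrix _ _ ℂ), ← hdet g, ← Matrix.mul_adjugate,
        ← mul_assoc, ← map_mul, inv_mul_cancel, map_one, one_mul]
    rw [htrace, htrace, hinv, trace_adjugate_fin_two]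
  · exact fun x g => ρ.char_conj g x
  · intro g
    rw [htrace, htrace, map_pow, trace_pow_of_det_eq_one (hdet g)]
    exact chebyshevC_seven_eval _
  · exact fun h => (htrace _).trans (trace_map_of_trace_eq_zero hR h)
  · exact fun h => (htrace _).trans (trace_map_of_trace_eq_neg_one hR h)
  · intro g h h₁
    rw [htrace]
    exact trace_map_of_trace_eq_two hR h h₁

namespace IsSpinCharacter

variable {θ ψ : SL(2, ZMod 5) → ℂ}

theorem comp_pow_seven (hθ : IsSpinCharacter θ) : IsSpinCharacter fun g => θ (g ^ 7) where
  charForm_self := (charForm_comp_pow_of_coprime (by rw [natCard_SL25]; decide) θ θ).trans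
    hθ.charForm_self
  map_one := by rw [one_pow, hθ.map_one]
  map_neg g := by rw [Odd.neg_pow (by decide), hθ.map_neg]
  map_inv g := by rw [inv_pow, hθ.map_inv]
  map_conj x g := by rw [conj_pow, hθ.map_conj]
  map_pow_seven g := hθ.map_pow_seven (g ^ 7)
  of_trace_eq_zero h := by rw [hθ.map_pow_seven, hθ.of_trace_eq_zero h]; norm_num
  of_trace_eq_neg_one h := by rw [hθ.map_pow_seven, hθ.of_trace_eq_neg_one h]; norm_num
  of_trace_eq_two {g} h h₁ := by
    have hx := hθ.of_trace_eq_two h h₁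
    rw [hθ.map_pow_seven, chebyshevC_seven_eval_of_sq_add_self_eq_one hx]
    linear_combination hx

theorem eq_of_apply_eq (hθ : IsSpinCharacter θ) (hψ : IsSpinCharacter ψ)
    (h : θ (.transvection zero_ne_one 1) = ψ (.transvection zero_ne_one 1)) : θ = ψ := by
  have htwo {g : SL(2, ZMod 5)} (hg : g.1.trace = 2) : θ g = ψ g := by
    by_cases h₁ : g = 1
    · rw [h₁, hθ.map_one, hψ.map_one]
    obtain ⟨x, rfl | rfl⟩ := exists_conj_of_trace_eq_two g hg h₁
    · rw [hθ.map_conj, hψ.map_conj, h]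
    · rw [hθ.map_conj, hψ.map_conj, hθ.map_pow_seven, hψ.map_pow_seven, h]
  have hthree {g : SL(2, ZMod 5)} (hg : g.1.trace = -1) : θ g = ψ g :=
    (hθ.of_trace_eq_neg_one hg).trans (hψ.of_trace_eq_neg_one hg).symm
  have hneg {g : SL(2, ZMod 5)} (hg : θ (-g) = ψ (-g)) : θ g = ψ g :=
    neg_injective ((hθ.map_neg g).symm.trans (hg.trans (hψ.map_neg g)))
  funext g
  rcases zmod_five_cases g.1.trace with h0 | (h1 | h1) | (h2 | h2)
  · exact (hθ.of_trace_eq_zero h0).trans (hψ.of_trace_eq_zero h0).symm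
  · exact hthree h1
  · exact hneg (hthree ((trace_neg_SL g).trans h1))
  · exact htwo h2
  · exact hneg (htwo ((trace_neg_SL g).trans h2))

theorem eq_or_eq_comp_pow_seven (hθ : IsSpinCharacter θ) (hψ : IsSpinCharacter ψ) :
    ψ = θ ∨ ψ = fun g => θ (g ^ 7) := by
  let u : SL(2, ZMod 5) := .transvection zero_ne_one 1
  have htrace : u.1.trace = 2 := by decide
  have hx := hθ.of_trace_eq_two htrace (by decide)
  have hy := hψ.of_trace_eq_two htrace (by decide)
  have hxy : (ψ u - θ u) * (ψ u - (-1 - θ u)) = 0 := by linear_combination hy - hx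
  rcases mul_eq_zero.mp hxy with h | h
  · exact Or.inl (hψ.eq_of_apply_eq hθ (sub_eq_zero.mp h))
  · refine Or.inr (hψ.eq_of_apply_eq hθ.comp_pow_seven ?_)
    rw [hθ.map_pow_seven, chebyshevC_seven_eval_of_sq_add_self_eq_one hx]
    exact sub_eq_zero.mp h

theorem comp_eq_of_pslOrder (hθ : IsSpinCharacter θ) {F : ℂ → ℂ} {c : ℂ}
    (hF : ∀ x, F (-x) = F x) (hc : ∀ x, x ^ 2 + x = 1 → F x = c) (g : SL(2, ZMod 5)) :
    F (θ g) = if pslOrder g = 1 then F 2 else if pslOrder g = 2 then F 0 else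
      if pslOrder g = 3 then F (-1) else c := by
  have hneg (h : SL(2, ZMod 5)) : F (θ (-h)) = F (θ h) := by rw [hθ.map_neg, hF]
  by_cases h1 : g = 1 ∨ g = -1
  · simp only [pslOrder, if_pos h1, if_true]
    rcases h1 with rfl | rfl
    · rw [hθ.map_one]
    · rw [hneg, hθ.map_one]
  by_cases h2 : g.1.trace = 0
  · simp [pslOrder, h1, h2, hθ.of_trace_eq_zero h2]
  by_cases h3 : g.1.trace = 1 ∨ g.1.trace = -1
  · simp only [pslOrder, if_neg h1, if_neg h2, if_pos h3, OfNat.ofNat_ne_one, Nat.reduceEqDiff,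
      if_false, if_true]
    rcases h3 with h3 | h3
    · rw [← hneg, hθ.of_trace_eq_neg_one ((trace_neg_SL g).trans (congrArg Neg.neg h3))]
    · rw [hθ.of_trace_eq_neg_one h3]
  simp only [pslOrder, if_neg h1, if_neg h2, if_neg h3, OfNat.ofNat_ne_one, Nat.reduceEqDiff,
    if_false]
  obtain ⟨hone, hnegOne⟩ := not_or.mp h1
  rcases ((zmod_five_cases g.1.trace).resolve_left h2).resolve_left
    fun h => h3 (h.symm.imp_left neg_inj.mp) with h | h
  · exact hc _ (hθ.of_trace_eq_two h hone)
  · rw [← hneg]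
    exact hc _ (hθ.of_trace_eq_two ((trace_neg_SL g).trans h) (mt neg_eq_iff_eq_neg.mp hnegOne))

theorem sum_comp (hθ : IsSpinCharacter θ) {F : ℂ → ℂ} {c : ℂ} (hF : ∀ x, F (-x) = F x)
    (hc : ∀ x, x ^ 2 + x = 1 → F x = c) :
    ∑ g, F (θ g) = 2 * F 2 + 30 * F 0 + 40 * F (-1) + 48 * c := by
  let v (n : ℕ) : ℂ := if n = 1 then F 2 else if n = 2 then F 0 else if n = 3 then F (-1) else c
  calc ∑ g, F (θ g) = ∑ g, v (pslOrder g) :=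
        Finset.sum_congr rfl fun g _ => hθ.comp_eq_of_pslOrder hF hc g
    _ = ((Finset.univ.val.map pslOrder).map v).sum := by rw [Multiset.map_map]; rfl
    _ = 2 * F 2 + 30 * F 0 + 40 * F (-1) + 48 * c := by
      rw [map_pslOrder_univ]
      simp only [Multiset.map_add, Multiset.map_replicate, Multiset.sum_add,
        Multiset.sum_replicate, nsmul_eq_mul]
      norm_num [v]

theorem charForm_comp_self (hθ : IsSpinCharacter θ) {P : ℂ → ℂ} (hP : ∀ x, P (-x) ^ 2 = P x ^ 2)
    (hc : ∀ x, x ^ 2 + x = 1 → P x ^ 2 = 1)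
    (h : 2 * P 2 ^ 2 + 30 * P 0 ^ 2 + 40 * P (-1) ^ 2 = 72) :
    charForm SL(2, ZMod 5) (fun g => P (θ g)) (fun g => P (θ g)) = 1 := by
  simp only [charForm_apply, hθ.map_inv, ← sq]
  rw [hθ.sum_comp (F := fun x => P x ^ 2) hP hc, natCard_SL25, h]
  norm_num

end IsSpinCharacter

end SpinCharacter

/-! ### Lifting characters along a surjection from a product -/

section Lift

variable {H K G : Type} [Group H] [Group K] [Group G] {π : H × K →* G}

/-- `f` is a virtual character of `G` whose inflation along `π : H × K →* G` is the external product
of `a` with the linear character `l`. -/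
structure IsLift (π : H × K →* G) (a : H → ℂ) (l : K →* ℂˣ) (f : G → ℂ) : Prop where
  mem_virtualChar : f ∈ virtualChar G
  apply_map (m : H) (k : K) : f (π (m, k)) = a m * l k

/-- The virtual characters of `G` that lift the external product of `a` with some linear
character. -/
def lifts (π : H × K →* G) (a : H → ℂ) : Set (G → ℂ) :=
  {f | ∃ l, IsLift π a l f}

namespace IsLift

variable {a b : H → ℂ} {l l' : K →* ℂˣ} {f f' : G → ℂ}

theorem apply_map_one (hf : IsLift π a l f) (m : H) : f (π (m, 1)) = a m := by
  rw [hf.apply_map, map_one, Units.val_one, mul_one]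

theorem eq_of_eq_right (hf : IsLift π a l f) (hf' : IsLift π a l f') (hπ : Function.Surjective π) :
    f = f' := by
  funext g
  obtain ⟨⟨m, k⟩, rfl⟩ := hπ g
  rw [hf.apply_map, hf'.apply_map]

theorem eq_of_eq_left (hf : IsLift π a l f) (hf' : IsLift π a l' f) (ha : a 1 ≠ 0) : l = l' := by
  ext k
  exact mul_left_cancel₀ ha ((hf.apply_map 1 k).symm.trans (hf'.apply_map 1 k))

theorem mul (hf : IsLift π a l f) (hf' : IsLift π b l' f') :
    IsLift π (a * b) (l * l') (f * f') where
  mem_virtualChar := mul_mem hf.mem_virtualChar hf'.mem_virtualChar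
  apply_map m k := by
    rw [Pi.mul_apply, hf.apply_map, hf'.apply_map, Pi.mul_apply, MonoidHom.mul_apply,
      Units.val_mul, mul_mul_mul_comm]

theorem dual (hf : IsLift π a l f) : IsLift π (fun m => a m⁻¹) l⁻¹ (fun g => f g⁻¹) where
  mem_virtualChar := dual_mem_virtualChar hf.mem_virtualChar
  apply_map m k := by
    rw [← map_inv, Prod.inv_mk, hf.apply_map, map_inv, MonoidHom.inv_apply]

theorem aeval (hf : IsLift π a 1 f) (Q : Polynomial ℤ) :
    IsLift π (Polynomial.aeval a Q) 1 (Polynomial.aeval f Q) where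
  mem_virtualChar := (Polynomial.aeval_algHom_apply (virtualChar G).subtype.toIntAlgHom
    ⟨f, hf.mem_virtualChar⟩ Q).symm ▸ Subtype.prop _
  apply_map m k := by
    rw [Polynomial.aeval_pi_apply₂, Polynomial.aeval_pi_apply₂, hf.apply_map, MonoidHom.one_apply,
      Units.val_one, mul_one, mul_one]

theorem mul_aeval (hf : IsLift π a l f) (ha : ∀ m, a m⁻¹ = a m) (Q : Polynomial ℤ) :
    IsLift π (a * Polynomial.aeval (a ^ 2) Q) l
      (f * Polynomial.aeval (f * fun g => f g⁻¹) Q) := by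
  have hinv : l * l⁻¹ = 1 := mul_inv_cancel l
  have hone : l * 1 = l := mul_one l
  have hsq : IsLift π (a ^ 2) 1 (f * fun g => f g⁻¹) := by
    simpa only [ha, hinv, ← sq] using hf.mul hf.dual
  exact hone ▸ hf.mul (hsq.aeval Q)

end IsLift

theorem ncard_lifts_le {a b : H → ℂ} (hπ : Function.Surjective π) (hb : b 1 ≠ 0)
    (hfin : (lifts π b).Finite) {l₀ : K →* ℂˣ} {t : (G → ℂ) → G → ℂ}
    (ht : ∀ l f, IsLift π a l f → IsLift π b (l * l₀) (t f)) :
    (lifts π a).ncard ≤ (lifts π b).ncard := by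
  refine Set.ncard_le_ncard_of_injOn t (fun f ⟨l, hl⟩ => ⟨l * l₀, ht l f hl⟩) ?_ hfin
  rintro f ⟨l, hf⟩ f' ⟨l', hf'⟩ heq
  have hl : l * l₀ = l' * l₀ := (ht l f hf).eq_of_eq_left (heq ▸ ht l' f' hf') hb
  rw [mul_right_cancel hl] at hf
  exact hf.eq_of_eq_right hf' hπ

theorem charForm_self_of_forall_apply_eq_mul [Fintype H] [Fintype K] [Fintype G] {a : H → ℂ}
    {b : K → ℂ} {f : G → ℂ} (hπ : Function.Surjective π) (hf : ∀ m k, f (π (m, k)) = a m * b k) :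
    charForm G f f = charForm H a a * charForm K b b := by
  rw [← charForm_comp_of_surjective hπ, ← charForm_prod]
  exact congrArg₂ (charForm (H × K) · ·) (funext fun x => hf x.1 x.2) (funext fun x => hf x.1 x.2)

theorem lifts_subset_irrCharOfDeg [Fintype H] [Finite K] [Finite G] {a : H → ℂ} {d : ℕ}
    (hπ : Function.Surjective π) (ha : charForm H a a = 1) (hd : a 1 = d) :
    lifts π a ⊆ irrCharOfDeg G d := by
  have := Fintype.ofFinite G
  have := Fintype.ofFinite K
  rintro f ⟨l, hf⟩
  have hone : f 1 = d := by rw [← map_one π, ← hd]; exact hf.apply_map_one 1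
  refine mem_irrCharOfDeg_of_charForm_self_eq_one hf.mem_virtualChar ?_ hone
  rw [charForm_self_of_forall_apply_eq_mul hπ hf.apply_map, ha, one_mul]
  exact charForm_monoidHom_self ((Units.coeHom ℂ).comp l)

theorem exists_isLift_one {Q : Type} [Group Q] {φ : H →* Q} (hπ : Function.Surjective π)
    (hker : ∀ m k, π (m, k) = 1 → φ m = 1) {f : Q → ℂ} (hf : f ∈ virtualChar Q) :
    ∃ σ, IsLift π (f ∘ φ) 1 σ := by
  let ψ : G →* Q := MonoidHom.liftOfSurjective π hπ
    ⟨φ.comp (MonoidHom.fst H K), fun x hx => hker x.1 x.2 hx⟩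
  refine ⟨f ∘ ψ, comp_mem_virtualChar ψ hf, fun m k => ?_⟩
  rw [MonoidHom.one_apply, Units.val_one, mul_one]
  exact congrArg f (MonoidHom.liftOfRightInverse_comp_apply _ _ _ _ (m, k))

end Lift

section EvenDegree

theorem exists_monoidHom_of_forall_eq_smul_one {K k A : Type*} [Monoid K] [Field k] [Ring A]
    [Nontrivial A] [Algebra k A] {τ : K →* A} (h : ∀ x, ∃ c : k, τ x = c • 1) :
    ∃ l : K →* k, ∀ x, τ x = l x • 1 := by
  choose c hc using h
  have hinj : Function.Injective fun c : k => c • (1 : A) := smul_left_injective k one_ne_zero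
  refine ⟨⟨⟨c, hinj ?_⟩, fun x y => hinj ?_⟩, hc⟩
  · exact (hc 1).symm.trans ((map_one τ).trans (one_smul k 1).symm)
  · calc c (x * y) • (1 : A) = τ x * τ y := (hc _).symm.trans (map_mul τ x y)
      _ = (c x * c y) • 1 := by rw [hc x, hc y, smul_one_mul, smul_smul]

theorem exists_even_charDeg {G : Type} [Group G] [Finite G] {H : Type*} [Group H]
    [Group.IsPerfect H] (φ : H →* G) {z : H} (hz : φ z ∈ Subgroup.center G) (hsq : φ z ^ 2 = 1)
    (hne : φ z ≠ 1) : ∃ χ ∈ IrrChar G, Even (charDeg χ) := by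
  obtain ⟨χ, hχ, hχz⟩ := exists_irrChar_apply_ne hne
  refine ⟨χ, hχ, ?_⟩
  have hdeg := apply_one_of_mem_irrChar hχ
  obtain ⟨V, hV, rfl⟩ := hχ
  obtain ⟨c, hc⟩ := exists_eq_smul_one_of_simple (V := V) hz
  have hrank : Module.finrank ℂ V = charDeg V.character := by
    exact_mod_cast (FDRep.char_one V).symm.trans hdeg
  have hdet : c ^ Module.finrank ℂ V = 1 := by
    have h := DFunLike.congr_fun (eq_one_of_isPerfect fun _ _ => Commute.all _ _ :
      (LinearMap.det : Module.End ℂ V →* ℂ).comp (V.ρ.comp φ) = 1) z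
    simpa [hc] using h
  have : Nontrivial V :=
    Module.nontrivial_of_finrank_pos (hrank ▸ charDeg_pos ⟨V, hV, rfl⟩)
  have hinj : Function.Injective fun c : ℂ => c • (1 : Module.End ℂ V) :=
    smul_left_injective ℂ one_ne_zero
  have hcsq : c ^ 2 = 1 := hinj <| by
    calc c ^ 2 • (1 : Module.End ℂ V) = V.ρ (φ z ^ 2) := by rw [map_pow, hc, smul_pow, one_pow]
      _ = (1 : ℂ) • 1 := by rw [hsq, map_one, one_smul]
  have hcone : c ≠ 1 := by
    rintro rfl
    refine hχz ?_
    simp only [FDRep.character, hc, map_one, one_smul]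
  rw [(sq_eq_one_iff.mp hcsq).resolve_left hcone] at hdet
  exact hrank ▸ (neg_one_pow_eq_one_iff_even (by norm_num)).mp hdet

end EvenDegree

section SpinLift

open scoped MatrixGroups

variable {K G : Type} [Group K] [Group G] {π : SL(2, ZMod 5) × K →* G}
  {θ : SL(2, ZMod 5) → ℂ}

theorem mul_aeval_sq_eq_chebyshevC_seven (x : ℂ) :
    x * Polynomial.aeval (x ^ 2)
      (.X ^ 3 - 7 * .X ^ 2 + 14 * .X - 7 : Polynomial ℤ) =
        x ^ 7 - 7 * x ^ 5 + 14 * x ^ 3 - 7 * x := by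
  simp only [map_sub, map_add, map_mul, map_pow, map_ofNat, Polynomial.aeval_X]
  ring

namespace IsSpinCharacter

theorem comp_pow_seven_pow_seven (hθ : IsSpinCharacter θ) : (fun g => θ ((g ^ 7) ^ 7)) = θ := by
  refine hθ.comp_pow_seven.comp_pow_seven.eq_of_apply_eq hθ ?_
  set u : SL(2, ZMod 5) := .transvection zero_ne_one 1
  have hu : θ u ^ 2 + θ u = 1 := hθ.of_trace_eq_two (by decide) (by decide)
  have hu' : (-1 - θ u) ^ 2 + (-1 - θ u) = 1 := by linear_combination hu
  rw [hθ.map_pow_seven (u ^ 7), hθ.map_pow_seven u,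
    chebyshevC_seven_eval_of_sq_add_self_eq_one hu,
    chebyshevC_seven_eval_of_sq_add_self_eq_one hu']
  ring

theorem isLift_comp (hθ : IsSpinCharacter θ) {l : K →* ℂˣ} {f : G → ℂ} (hf : IsLift π θ l f)
    {P : ℂ → ℂ} {Q : Polynomial ℤ} (hP : ∀ x, x * Polynomial.aeval (x ^ 2) Q = P x) :
    IsLift π (fun g => P (θ g)) l (f * Polynomial.aeval (f * fun g => f g⁻¹) Q) := by
  have heq : θ * Polynomial.aeval (θ ^ 2) Q = fun g => P (θ g) := by
    funext g
    rw [← hP, Pi.mul_apply, Polynomial.aeval_pi_apply₂, Pi.pow_apply]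
  exact heq ▸ hf.mul_aeval hθ.map_inv Q

theorem isLift_comp_pow_seven (hθ : IsSpinCharacter θ) {l : K →* ℂˣ} {f : G → ℂ}
    (hf : IsLift π θ l f) : ∃ f', IsLift π (fun g => θ (g ^ 7)) l f' := by
  simp only [hθ.map_pow_seven]
  exact ⟨_, hθ.isLift_comp hf mul_aeval_sq_eq_chebyshevC_seven⟩

theorem ncard_lifts_le (hθ : IsSpinCharacter θ) (hπ : Function.Surjective π) {P : ℂ → ℂ}
    {Q : Polynomial ℤ} (hP : ∀ x, x * Polynomial.aeval (x ^ 2) Q = P x) (hP2 : P 2 ≠ 0)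
    (hfin : (lifts π fun g => P (θ g)).Finite) :
    (lifts π θ).ncard ≤ (lifts π fun g => P (θ g)).ncard :=
  _root_.ncard_lifts_le hπ (by rwa [hθ.map_one]) hfin (l₀ := 1)
    (t := fun f => f * Polynomial.aeval (f * fun g => f g⁻¹) Q)
    fun l _ hf => (mul_one l).symm ▸ hθ.isLift_comp hf hP

theorem disjoint_lifts_cube_sub (hθ : IsSpinCharacter θ) :
    Disjoint (lifts π fun g => θ g ^ 3 - 2 * θ g) (lifts π (θ * fun g => θ (g ^ 7))) := by
  refine Set.disjoint_left.mpr fun f ⟨l, hf⟩ ⟨l', hf'⟩ => ?_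
  have h := (hf.apply_map_one (-1)).symm.trans (hf'.apply_map_one (-1))
  have hneg : θ (-1) = -2 := by rw [hθ.map_neg, hθ.map_one]
  norm_num [hθ.map_pow_seven, hneg] at h

variable [Finite K] [Finite G]

theorem finite_lifts (hθ : IsSpinCharacter θ) (hπ : Function.Surjective π) :
    (lifts π θ).Finite :=
  (finite_irrCharOfDeg G 2).subset (lifts_subset_irrCharOfDeg hπ hθ.charForm_self hθ.map_one)

theorem ncard_lifts_le_ncard_lifts_comp_pow_seven (hθ : IsSpinCharacter θ)
    (hπ : Function.Surjective π) :
    (lifts π θ).ncard ≤ (lifts π fun g => θ (g ^ 7)).ncard := by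
  have hfin := hθ.comp_pow_seven.finite_lifts hπ
  simp only [hθ.map_pow_seven] at hfin ⊢
  exact hθ.ncard_lifts_le hπ mul_aeval_sq_eq_chebyshevC_seven (by norm_num) hfin

theorem ncard_lifts_comp_pow_seven_le (hθ : IsSpinCharacter θ) (hπ : Function.Surjective π) :
    (lifts π fun g => θ (g ^ 7)).ncard ≤ (lifts π θ).ncard := by
  have h := hθ.comp_pow_seven.ncard_lifts_le_ncard_lifts_comp_pow_seven hπ
  rwa [hθ.comp_pow_seven_pow_seven] at h

theorem ncard_lifts_le_ncard_irrCharOfDeg_six (hθ : IsSpinCharacter θ)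
    (hπ : Function.Surjective π) : (lifts π θ).ncard ≤ (irrCharOfDeg G 6).ncard := by
  let P (x : ℂ) : ℂ := x ^ 5 - 4 * x ^ 3 + 3 * x
  have hsub : (lifts π fun g => P (θ g)) ⊆ irrCharOfDeg G 6 := by
    refine lifts_subset_irrCharOfDeg hπ
      (hθ.charForm_comp_self (fun x => ?_) (fun x hx => ?_) ?_) ?_
    · ring
    · have hP : P x = 1 := by linear_combination (x ^ 3 - x ^ 2 - 2 * x + 1) * hx
      rw [hP, one_pow]
    · norm_num [P]
    · norm_num [P, hθ.map_one]
  have hfin := finite_irrCharOfDeg G 6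
  refine (hθ.ncard_lifts_le hπ (Q := .X ^ 2 - 4 * .X + 3) (P := P) (fun x => ?_) (by norm_num [P])
    (hfin.subset hsub)).trans (Set.ncard_le_ncard hsub hfin)
  simp only [P, map_sub, map_add, map_mul, map_pow, map_ofNat, Polynomial.aeval_X]
  ring

theorem lifts_cube_sub_subset_irrCharOfDeg (hθ : IsSpinCharacter θ) (hπ : Function.Surjective π) :
    (lifts π fun g => θ g ^ 3 - 2 * θ g) ⊆ irrCharOfDeg G 4 := by
  refine lifts_subset_irrCharOfDeg hπ (hθ.charForm_comp_self (P := fun x => x ^ 3 - 2 * x)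
    (fun x => ?_) (fun x hx => ?_) ?_) ?_
  · ring
  · have hP : x ^ 3 - 2 * x = -1 := by linear_combination (x - 1) * hx
    rw [hP, neg_one_sq]
  · norm_num
  · norm_num [hθ.map_one]

theorem ncard_lifts_le_ncard_lifts_cube_sub (hθ : IsSpinCharacter θ) (hπ : Function.Surjective π) :
    (lifts π θ).ncard ≤ (lifts π fun g => θ g ^ 3 - 2 * θ g).ncard := by
  refine hθ.ncard_lifts_le hπ (Q := .X - 2) (P := fun x => x ^ 3 - 2 * x) (fun x => ?_)
    (by norm_num) ((finite_irrCharOfDeg G 4).subset (hθ.lifts_cube_sub_subset_irrCharOfDeg hπ))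
  simp only [map_sub, map_ofNat, Polynomial.aeval_X]
  ring

theorem lifts_mul_comp_pow_seven_subset_irrCharOfDeg (hθ : IsSpinCharacter θ)
    (hπ : Function.Surjective π) :
    lifts π (θ * fun g => θ (g ^ 7)) ⊆ irrCharOfDeg G 4 := by
  let P (x : ℂ) : ℂ := x * (x ^ 7 - 7 * x ^ 5 + 14 * x ^ 3 - 7 * x)
  have hP : (θ * fun g => θ (g ^ 7)) = fun g => P (θ g) := by
    simp only [hθ.map_pow_seven]
    rfl
  rw [hP]
  refine lifts_subset_irrCharOfDeg hπ (hθ.charForm_comp_self (fun x => ?_) (fun x hx => ?_) ?_) ?_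
  · ring
  · have hP : P x = -1 := by
      simp only [P]
      rw [chebyshevC_seven_eval_of_sq_add_self_eq_one hx]
      linear_combination -hx
    rw [hP, neg_one_sq]
  · norm_num [P]
  · norm_num [P, hθ.map_one]

theorem ncard_lifts_le_ncard_lifts_mul_comp_pow_seven (hθ : IsSpinCharacter θ)
    (hπ : Function.Surjective π) :
    (lifts π θ).ncard ≤ (lifts π (θ * fun g => θ (g ^ 7))).ncard := by
  rcases (lifts π θ).eq_empty_or_nonempty with hempty | ⟨f₁, l₀, hf₁⟩
  · rw [hempty, Set.ncard_empty]
    exact Nat.zero_le _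
  obtain ⟨f₀, hf₀⟩ := hθ.isLift_comp_pow_seven hf₁
  refine _root_.ncard_lifts_le hπ ?_
    ((finite_irrCharOfDeg G 4).subset (hθ.lifts_mul_comp_pow_seven_subset_irrCharOfDeg hπ))
    fun l f hf => hf.mul hf₀
  norm_num [hθ.map_one]

theorem two_mul_ncard_lifts_le_ncard_irrCharOfDeg_four (hθ : IsSpinCharacter θ)
    (hπ : Function.Surjective π) : 2 * (lifts π θ).ncard ≤ (irrCharOfDeg G 4).ncard := by
  have hfin := finite_irrCharOfDeg G 4
  have hA := hθ.lifts_cube_sub_subset_irrCharOfDeg hπ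
  have hB := hθ.lifts_mul_comp_pow_seven_subset_irrCharOfDeg hπ
  rw [two_mul]
  calc _ ≤ _ := add_le_add (hθ.ncard_lifts_le_ncard_lifts_cube_sub hπ)
        (hθ.ncard_lifts_le_ncard_lifts_mul_comp_pow_seven hπ)
    _ = _ := (Set.ncard_union_eq hθ.disjoint_lifts_cube_sub (hfin.subset hA) (hfin.subset hB)).symm
    _ ≤ _ := Set.ncard_le_ncard (Set.union_subset hA hB) hfin

end IsSpinCharacter

theorem apply_eq_or_mem_lifts_of_mem_irrCharOfDeg_two {f : G → ℂ} (hf : f ∈ irrCharOfDeg G 2) :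
    (∀ m k, f (π (m, k)) = f (π (1, k))) ∨ ∃ θ, IsSpinCharacter θ ∧ f ∈ lifts π θ := by
  have hvirt := mem_virtualChar_of_mem_irrChar hf.1
  have hdeg := apply_one_of_mem_irrChar hf.1
  rw [hf.2] at hdeg
  obtain ⟨⟨V, -, rfl⟩, -⟩ := hf
  have hV : Module.finrank ℂ V = 2 := by exact_mod_cast (FDRep.char_one V).symm.trans hdeg
  have hmul (m : SL(2, ZMod 5)) (k : K) : π (m, k) = π (m, 1) * π (1, k) := by
    rw [← map_mul, Prod.mk_mul_mk, mul_one, one_mul]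
  have hcomm (m : SL(2, ZMod 5)) (k : K) : Commute (V.ρ (π (1, k))) (V.ρ (π (m, 1))) := by
    have h : Commute ((1, k) : SL(2, ZMod 5) × K) (m, 1) :=
      (Commute.one_left m).prod (Commute.one_right k)
    exact (h.map π).map V.ρ
  let ρ : Representation ℂ SL(2, ZMod 5) V := V.ρ.comp (π.comp (MonoidHom.inl _ _))
  by_cases hρ : ρ = 1
  · left
    intro m k
    have hm : V.ρ (π (m, 1)) = 1 := DFunLike.congr_fun hρ m
    simp only [FDRep.character, hmul m k, map_mul, hm, one_mul]
  · right
    have := isIrreducible_of_finrank_eq_two hV hρ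
    have : Nontrivial V := Module.nontrivial_of_finrank_eq_succ hV
    obtain ⟨l, hl⟩ := exists_monoidHom_of_forall_eq_smul_one
      (τ := V.ρ.comp (π.comp (MonoidHom.inr _ _)))
      fun k => exists_eq_smul_one_of_commute (ρ := ρ) fun m => hcomm m k
    refine ⟨ρ.character, isSpinCharacter_character hV hρ, l.toHomUnits, hvirt, fun m k => ?_⟩
    have hk : V.ρ (π (1, k)) = l k • 1 := hl k
    rw [MonoidHom.coe_toHomUnits, mul_comm, ← smul_eq_mul, Representation.character, ← map_smul]
    simp only [FDRep.character, hmul m k, map_mul, hk, mul_smul_comm, mul_one]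
    rfl

end SpinLift

section Steinberg

open scoped MatrixGroups LinearAlgebra.Projectivization

variable {K G : Type} [Group K] [Group G] {π : SL(2, ZMod 5) × K →* G}

theorem natCard_projectiveLine_zmod_five : Nat.card (ℙ (ZMod 5) (Fin 2 → ZMod 5)) = 6 := by
  rw [Projectivization.card_of_finrank_two _ _ (Module.finrank_fin_fun _), Nat.card_zmod]

/-- The Steinberg character of `SL(2, 5)`: the permutation character on the projective line minus
the trivial character. -/
noncomputable def steinberg (g : SL(2, ZMod 5)) : ℂ :=
  Nat.card (MulAction.fixedBy (ℙ (ZMod 5) (Fin 2 → ZMod 5)) g) - 1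

theorem steinberg_one : steinberg 1 = 5 := by
  rw [steinberg, MulAction.fixedBy_one_eq_univ, Nat.card_coe_set_eq, Set.ncard_univ,
    natCard_projectiveLine_zmod_five]
  norm_num

theorem charForm_steinberg_self : charForm SL(2, ZMod 5) steinberg steinberg = 1 := by
  have : Nontrivial (ℙ (ZMod 5) (Fin 2 → ZMod 5)) := by
    rw [← Finite.one_lt_card_iff_nontrivial, natCard_projectiveLine_zmod_five]
    norm_num
  exact charForm_card_fixedBy_sub_one_self _

theorem exists_isLift_steinberg (hπ : Function.Surjective π)
    (hker : ∀ m k, π (m, k) = 1 → m ∈ Subgroup.center SL(2, ZMod 5)) :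
    ∃ σ, IsLift π steinberg 1 σ := by
  let X := ℙ (ZMod 5) (Fin 2 → ZMod 5)
  have hvirt : (fun g : Equiv.Perm X => (Nat.card (MulAction.fixedBy X g) : ℂ)) - 1 ∈
      virtualChar (Equiv.Perm X) := sub_mem (card_fixedBy_mem_virtualChar X) (one_mem _)
  refine exists_isLift_one (φ := MulAction.toPermHom SL(2, ZMod 5) X) hπ (fun m k hmk => ?_) hvirt
  rw [← MonoidHom.mem_ker, Projectivization.SL_mulAction_ker]
  exact hker m k hmk

end Steinberg

/-! ### Counting characters of even degree -/

section Count

open scoped MatrixGroups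

theorem IsLift.mul_mem_irrCharOfDeg {H K G : Type} [Group H] [Fintype H] [Group K] [Finite K]
    [Group G] [Finite G] {π : H × K →* G} {a : H → ℂ} {σ f : G → ℂ} {d n : ℕ}
    (hσ : IsLift π a 1 σ) (hπ : Function.Surjective π) (ha : charForm H a a = 1) (hd : a 1 = d)
    (hf : f ∈ irrCharOfDeg G n) (hinfl : ∀ m k, f (π (m, k)) = f (π (1, k))) :
    σ * f ∈ irrCharOfDeg G (d * n) := by
  have := Fintype.ofFinite G
  have := Fintype.ofFinite K
  have hone : charForm H 1 1 = 1 := charForm_monoidHom_self 1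
  have hnorm : charForm K (fun k => f (π (1, k))) (fun k => f (π (1, k))) = 1 := by
    have h := charForm_self_of_forall_apply_eq_mul hπ (a := 1) (b := fun k => f (π (1, k)))
      fun m k => (hinfl m k).trans (one_mul _).symm
    rwa [charForm_eq_ite hf.1 hf.1, if_pos rfl, hone, one_mul, eq_comm] at h
  refine mem_irrCharOfDeg_of_charForm_self_eq_one
    (mul_mem hσ.mem_virtualChar (mem_virtualChar_of_mem_irrChar hf.1)) ?_ ?_
  · rw [charForm_self_of_forall_apply_eq_mul hπ (a := a) (b := fun k => f (π (1, k))), ha, hnorm,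
      one_mul]
    intro m k
    rw [Pi.mul_apply, hσ.apply_map, MonoidHom.one_apply, Units.val_one, mul_one, hinfl]
  · have hσone : σ 1 = d := by rw [← hd, ← hσ.apply_map_one, Prod.mk_one_one, map_one]
    rw [Pi.mul_apply, hσone, apply_one_of_mem_irrChar hf.1, hf.2, Nat.cast_mul]

variable {K G : Type} [Group K] [Group G] {π : SL(2, ZMod 5) × K →* G}

theorem irrCharOfDeg_two_subset {θ : SL(2, ZMod 5) → ℂ} (hθ : IsSpinCharacter θ) :
    irrCharOfDeg G 2 ⊆ {f ∈ irrCharOfDeg G 2 | ∀ m k, f (π (m, k)) = f (π (1, k))} ∪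
      (lifts π θ ∪ lifts π fun g => θ (g ^ 7)) := by
  intro f hf
  rcases apply_eq_or_mem_lifts_of_mem_irrCharOfDeg_two (π := π) hf with h | ⟨ψ, hψ, hfψ⟩
  · exact Or.inl ⟨hf, h⟩
  · rcases hθ.eq_or_eq_comp_pow_seven hψ with rfl | rfl
    · exact Or.inr (Or.inl hfψ)
    · exact Or.inr (Or.inr hfψ)

variable [Finite K] [Finite G]

theorem ncard_inflated_irrCharOfDeg_two_le (hπ : Function.Surjective π)
    (hker : ∀ m k, π (m, k) = 1 → m ∈ Subgroup.center SL(2, ZMod 5)) :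
    {f ∈ irrCharOfDeg G 2 | ∀ m k, f (π (m, k)) = f (π (1, k))}.ncard ≤
      (irrCharOfDeg G 10).ncard := by
  obtain ⟨σ, hσ⟩ := exists_isLift_steinberg hπ hker
  have hσone (k : K) : σ (π (1, k)) = 5 := by
    rw [hσ.apply_map, steinberg_one, MonoidHom.one_apply, Units.val_one, mul_one]
  refine Set.ncard_le_ncard_of_injOn (σ * ·) (fun f ⟨hf, hinfl⟩ =>
    hσ.mul_mem_irrCharOfDeg (d := 5) hπ charForm_steinberg_self steinberg_one hf hinfl)
    (fun f ⟨_, hf⟩ f' ⟨_, hf'⟩ heq => ?_) (finite_irrCharOfDeg G 10)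
  funext g
  obtain ⟨⟨m, k⟩, rfl⟩ := hπ g
  have h : σ (π (1, k)) * f (π (1, k)) = σ (π (1, k)) * f' (π (1, k)) := congrFun heq _
  rw [hσone] at h
  rw [hf, hf', mul_left_cancel₀ (by norm_num) h]

theorem exists_ncard_irrCharOfDeg_bounds (hπ : Function.Surjective π)
    (hker : ∀ m k, π (m, k) = 1 → m ∈ Subgroup.center SL(2, ZMod 5)) :
    ∃ l, (irrCharOfDeg G 2).ncard ≤ (irrCharOfDeg G 10).ncard + 2 * l ∧
      2 * l ≤ (irrCharOfDeg G 4).ncard ∧ l ≤ (irrCharOfDeg G 6).ncard := by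
  have hten := ncard_inflated_irrCharOfDeg_two_le hπ hker
  have hfin := finite_irrCharOfDeg G 2
  by_cases hspin : ∃ θ, IsSpinCharacter θ
  · obtain ⟨θ, hθ⟩ := hspin
    refine ⟨(lifts π θ).ncard, ?_, hθ.two_mul_ncard_lifts_le_ncard_irrCharOfDeg_four hπ,
      hθ.ncard_lifts_le_ncard_irrCharOfDeg_six hπ⟩
    have hunion := Set.ncard_le_ncard (irrCharOfDeg_two_subset (π := π) hθ)
      ((hfin.subset (Set.sep_subset _ _)).union
        ((hθ.finite_lifts hπ).union (hθ.comp_pow_seven.finite_lifts hπ)))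
    have hle := hunion.trans ((Set.ncard_union_le _ _).trans
      (Nat.add_le_add_left (Set.ncard_union_le _ _) _))
    have hseven := hθ.ncard_lifts_comp_pow_seven_le hπ
    omega
  · have hsub : irrCharOfDeg G 2 ⊆
        {f ∈ irrCharOfDeg G 2 | ∀ m k, f (π (m, k)) = f (π (1, k))} := fun f hf =>
      ⟨hf, (apply_eq_or_mem_lifts_of_mem_irrCharOfDeg_two hf).resolve_right
        fun ⟨θ, hθ, _⟩ => hspin ⟨θ, hθ⟩⟩
    exact ⟨0, (Set.ncard_le_ncard hsub (hfin.subset (Set.sep_subset _ _))).trans hten,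
      Nat.zero_le _, Nat.zero_le _⟩

end Count

section Average

theorem le_sub_of_even {d : ℕ} (hpos : 0 < d) (heven : Even d) :
    (-(8 / 5) * (if d = 2 then 1 else 0) + 2 / 5 * (if d = 4 then 1 else 0) +
      12 / 5 * (if d = 6 then 1 else 0) + 32 / 5 * (if d = 10 then 1 else 0) : ℝ) ≤
        d - 18 / 5 := by
  obtain ⟨k, rfl⟩ := heven
  by_cases hk : k ≤ 5
  · interval_cases k <;> norm_num at *
  · have h6 : (6 : ℝ) ≤ k := by exact_mod_cast (not_le.mp hk : 6 ≤ k)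
    rw [if_neg (by omega), if_neg (by omega), if_neg (by omega), if_neg (by omega)]
    push_cast
    linarith

theorem sum_ite_charDeg_eq_ncard {G : Type} [Group G] {T : Finset (G → ℂ)}
    (hT : (T : Set (G → ℂ)) = {χ ∈ IrrChar G | Even (charDeg χ)}) {d : ℕ} (hd : Even d) :
    ∑ χ ∈ T, (if charDeg χ = d then 1 else 0 : ℝ) = (irrCharOfDeg G d).ncard := by
  have : irrCharOfDeg G d = (T.filter fun χ => charDeg χ = d : Finset (G → ℂ)) := by
    rw [Finset.coe_filter]
    ext χ
    rw [Set.mem_ofPred_eq, ← Finset.mem_coe, hT]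
    exact ⟨fun h => ⟨⟨h.1, h.2 ▸ hd⟩, h.2⟩, fun h => ⟨h.1.1, h.2⟩⟩
  rw [this, Set.ncard_coe_finset, Finset.sum_boole]

theorem le_acde_of_ncard_irrCharOfDeg {G : Type} [Group G] [Finite G]
    (hne : ∃ χ ∈ IrrChar G, Even (charDeg χ)) {l : ℕ}
    (htwo : (irrCharOfDeg G 2).ncard ≤ (irrCharOfDeg G 10).ncard + 2 * l)
    (hfour : 2 * l ≤ (irrCharOfDeg G 4).ncard) (hsix : l ≤ (irrCharOfDeg G 6).ncard) :
    18 / 5 ≤ acde G := by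
  obtain ⟨T, hT⟩ := ((finite_irrChar G).subset
    (Set.sep_subset (IrrChar G) fun χ => Even (charDeg χ))).exists_finset_coe
  have hmem {χ : G → ℂ} : χ ∈ T ↔ χ ∈ IrrChar G ∧ Even (charDeg χ) := by
    rw [← Finset.mem_coe, hT]
    rfl
  have hcard : 0 < T.card := Finset.card_pos.mpr (hne.imp fun χ h => hmem.mpr h)
  have hsum := Finset.sum_le_sum fun χ (h : χ ∈ T) =>
    le_sub_of_even (charDeg_pos (hmem.mp h).1) (hmem.mp h).2
  simp only [Finset.sum_add_distrib, ← Finset.mul_sum, Finset.sum_sub_distrib, Finset.sum_const,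
    nsmul_eq_mul, sum_ite_charDeg_eq_ncard hT (by decide : Even 2),
    sum_ite_charDeg_eq_ncard hT (by decide : Even 4),
    sum_ite_charDeg_eq_ncard hT (by decide : Even 6),
    sum_ite_charDeg_eq_ncard hT (by decide : Even 10)] at hsum
  rw [acde, acdRel, ← hT, finsum_mem_coe_finset, Set.ncard_coe_finset,
    le_div_iff₀ (by exact_mod_cast hcard)]
  rify at htwo hfour hsix
  linarith

end Average

section CentralProduct

open scoped MatrixGroups

variable {H K G : Type} [Group H] [Group K] [Group G] {π : H × K →* G}

theorem apply_mk_one_mem_center (hπ : Function.Surjective π) {m : H}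
    (hm : m ∈ Subgroup.center H) : π (m, 1) ∈ Subgroup.center G := by
  refine Subgroup.mem_center_iff.mpr fun g => ?_
  obtain ⟨⟨x, k⟩, rfl⟩ := hπ g
  rw [← map_mul, ← map_mul, Prod.mk_mul_mk, Prod.mk_mul_mk, Subgroup.mem_center_iff.mp hm x,
    mul_one, one_mul]

theorem mem_center_of_apply_eq_one (hinj : Function.Injective fun m => π (m, 1)) {m : H} {k : K}
    (hmk : π (m, k) = 1) : m ∈ Subgroup.center H := by
  refine Subgroup.mem_center_iff.mpr fun x => hinj ?_
  have hm : π (m, 1) = π (1, k⁻¹) := by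
    rw [← mul_one (π (1, k⁻¹)), ← hmk, ← map_mul, Prod.mk_mul_mk, one_mul, inv_mul_cancel]
  calc π (x * m, 1) = π (x, 1) * π (m, 1) := by rw [← map_mul, Prod.mk_mul_mk, one_mul]
    _ = π (m, 1) * π (x, 1) := by
      rw [hm, ← map_mul, ← map_mul, Prod.mk_mul_mk, Prod.mk_mul_mk, mul_one, one_mul, one_mul,
        mul_one]
    _ = π (m * x, 1) := by rw [← map_mul, Prod.mk_mul_mk, one_mul]

theorem le_acde_of_surjective [Finite K] [Finite G] {π : SL(2, ZMod 5) × K →* G}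
    (hπ : Function.Surjective π) (hinj : Function.Injective fun m => π (m, 1)) :
    18 / 5 ≤ acde G := by
  obtain ⟨l, htwo, hfour, hsix⟩ :=
    exists_ncard_irrCharOfDeg_bounds hπ fun _ _ => mem_center_of_apply_eq_one hinj
  have heven : ∃ χ ∈ IrrChar G, Even (charDeg χ) := by
    refine exists_even_charDeg (π.comp (MonoidHom.inl _ _)) (z := -1)
      (apply_mk_one_mem_center hπ ?_) ?_ fun h => ?_
    · exact Subgroup.mem_center_iff.mpr fun x => (Commute.neg_one_right x).eq
    · rw [← map_pow, neg_one_sq, map_one]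
    · exact absurd (hinj (h.trans (map_one π).symm)) (by decide)
  exact le_acde_of_ncard_irrCharOfDeg heven htwo hfour hsix

end CentralProduct

theorem acde_ge_of_central_product_SL25_general (G : Type) [Group G] [Finite G] (M C : Subgroup G)
    (hprod : ∀ g : G, ∃ m ∈ M, ∃ c ∈ C, g = m * c)
    (hcomm : ∀ m ∈ M, ∀ c ∈ C, m * c = c * m)
    (hM : Nonempty (M ≃* Matrix.SpecialLinearGroup (Fin 2) (ZMod 5))) :
    18 / 5 ≤ acde G := by
  obtain ⟨e⟩ := hM
  let j : Matrix.SpecialLinearGroup (Fin 2) (ZMod 5) →* G := M.subtype.comp e.symm.toMonoidHom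
  let π := j.noncommCoprod C.subtype fun m c => hcomm _ (e.symm m).2 _ c.2
  have hπ : Function.Surjective π := fun g => by
    obtain ⟨m, hm, c, hc, rfl⟩ := hprod g
    exact ⟨(e ⟨m, hm⟩, ⟨c, hc⟩), by simp [π, j]⟩
  have hj : Function.Injective fun m => π (m, 1) := by
    have h : (fun m => π (m, 1)) = j := funext fun m => mul_one (j m)
    exact h ▸ M.subtype_injective.comp e.symm.injective
  exact le_acde_of_surjective hπ hj

/-- If the finite group `G` is a central product `G = MC` with `M ≅ SL(2,5)` and
`M ∩ C = Z(M)`, then `acde(G) ≥ 18/5`. -/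
theorem acde_ge_of_central_product_SL25 (G : Type) [Group G] [Finite G] (M C : Subgroup G)
    (hprod : ∀ g : G, ∃ m ∈ M, ∃ c ∈ C, g = m * c)
    (hcomm : ∀ m ∈ M, ∀ c ∈ C, m * c = c * m)
    (hM : Nonempty (M ≃* Matrix.SpecialLinearGroup (Fin 2) (ZMod 5)))
    (hZ : M ⊓ C = (Subgroup.center ↥M).map M.subtype) :
    18 / 5 ≤ acde G :=
  acde_ge_of_central_product_SL25_general G M C hprod hcomm hM
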